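/- arXiv:1505.00213 — 4 statements merged into one kernel-verified Lean document; each statement's English description precedes it below -/
import Mathlib

section
/- Fix k ≥ 1 and ℓ ≥ 0, and let B = ∏_{i=1}^{k} [a_i, b_i] ⊂ ℝ^k be a nondegenerate closed axis-parallel box (a_i < b_i for all i). Let E(B, ℓ) be the space of ℓ-tuples of nondegenerate closed axis-parallel sub-boxes of B that are pairwise disjoint, topologized as a subspace of ((ℝ^k)²)^ℓ via corner coordinates. Then E(B, ℓ) is (k−2)-connected: it is nonempty; if k ≥ 2 it is path-connected; and for every basepoint e and every 1 ≤ m ≤ k−2, the homotopy group π_m(E(B, ℓ), e) is trivial. -/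
/-- The space `E(B, ℓ)` of `ℓ`-tuples of pairwise disjoint nondegenerate closed
axis-parallel sub-boxes of the box `B = Icc a b ⊆ ℝ^k`, parametrized by corner
coordinates, as a subspace of `((ℝ^k)²)^ℓ`. -/
def BoxTuples (k ℓ : ℕ) (a b : Fin k → ℝ) :
    Set (Fin ℓ → (Fin k → ℝ) × (Fin k → ℝ)) :=
  {t | (∀ j, ∀ i, (t j).1 i < (t j).2 i) ∧
       (∀ j, Set.Icc (t j).1 (t j).2 ⊆ Set.Icc a b) ∧
       ∀ j j', j ≠ j' →
         Disjoint (Set.Icc (t j).1 (t j).2) (Set.Icc (t j').1 (t j').2)}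

open Set Metric Topology
open scoped unitInterval

/-- Two maps into a subset `s` of a topological vector space are homotopic in `s` as soon as the
segments joining their values stay in `s`. -/
theorem homotopic_of_segment_subset {Y V : Type*} [TopologicalSpace Y] [AddCommGroup V]
    [TopologicalSpace V] [IsTopologicalAddGroup V] [Module ℝ V] [ContinuousSMul ℝ V] {s : Set V}
    (f g : C(Y, s)) (h : ∀ y, segment ℝ (f y : V) (g y) ⊆ s) : f.Homotopic g :=
  ⟨{ toFun := fun p => ⟨AffineMap.lineMap (f p.2 : V) (g p.2 : V) (p.1 : ℝ), h p.2 <| by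
        rw [segment_eq_image_lineMap]
        exact mem_image_of_mem _ p.1.2⟩
     continuous_toFun := by
        refine Continuous.subtype_mk ?_ _
        simp only [AffineMap.lineMap_apply_module]
        fun_prop
     map_zero_left := fun y => by simp
     map_one_left := fun y => by simp }⟩

/-- A null-homotopic map on the unit sphere of a normed space extends to the whole space. -/
theorem exists_extension_of_nullhomotopic {V X : Type*} [NormedAddCommGroup V] [NormedSpace ℝ V]
    [TopologicalSpace X] {f : C(sphere (0 : V) 1, X)} (hf : f.Nullhomotopic) :
    ∃ F : C(V, X), ∀ z, F (z : sphere (0 : V) 1) = f z := by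
  classical
  obtain ⟨x₀, ⟨H⟩⟩ := hf
  rcases isEmpty_or_nonempty (sphere (0 : V) 1) with hS | ⟨⟨z₀⟩⟩
  · exact ⟨ContinuousMap.const _ x₀, fun z => hS.elim z⟩
  let N : V → sphere (0 : V) 1 := fun z =>
    if h : z = 0 then z₀ else ⟨‖z‖⁻¹ • z, by simp [norm_smul, h]⟩
  have hN : ContinuousOn N {z | 1 / 2 ≤ ‖z‖} := by
    rw [IsInducing.subtypeVal.continuousOn_iff]
    have h0 : ∀ z ∈ {z : V | 1 / 2 ≤ ‖z‖}, ‖z‖ ≠ 0 := fun z hz => by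
      have : (1 / 2 : ℝ) ≤ ‖z‖ := hz
      linarith
    have h1 : ContinuousOn (fun z : V => ‖z‖⁻¹ • z) {z | 1 / 2 ≤ ‖z‖} :=
      (continuous_norm.continuousOn.inv₀ h0).smul continuousOn_id
    refine h1.congr fun z hz => ?_
    have : z ≠ 0 := by simpa using h0 z hz
    simp [N, this]
  refine ⟨⟨fun z => if ‖z‖ ≤ 1 / 2 then x₀ else H (projIcc 0 1 zero_le_one (2 - 2 * ‖z‖), N z),
    ?_⟩, fun z => ?_⟩
  · refine continuous_if_le (by fun_prop) (by fun_prop) continuousOn_const ?_ fun z hz => ?_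
    · refine H.continuous.comp_continuousOn (ContinuousOn.prodMk ?_ hN)
      exact (continuous_projIcc.comp (by fun_prop)).continuousOn
    · have : projIcc (0 : ℝ) 1 zero_le_one (2 - 2 * ‖z‖) = 1 := by
        rw [hz]; norm_num [projIcc_eq_one]
      rw [this]
      simp
  · have hz : ‖(z : V)‖ = 1 := by simp
    have h0 : (z : V) ≠ 0 := fun h => by simp [h] at hz
    have hNz : N z = z := by ext1; simp [N, h0, hz]
    norm_num [hNz, hz]

/-- If every map from the unit sphere of `ℝ^(m+1)` (with the sup norm) to `X` is null-homotopic,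
then `π_m X` is trivial for every base point. -/
theorem subsingleton_homotopyGroup_of_nullhomotopic {X : Type*} [TopologicalSpace X] (m : ℕ)
    (hX : ∀ f : C(sphere (0 : Fin (m + 1) → ℝ) 1, X), f.Nullhomotopic) (e : X) :
    Subsingleton (HomotopyGroup (Fin m) X e) := by
  classical
  suffices h : ∀ f : GenLoop (Fin m) X e, GenLoop.Homotopic f GenLoop.const by
    refine ⟨fun x y => ?_⟩
    induction x using Quotient.inductionOn with | _ f =>
    induction y using Quotient.inductionOn with | _ g =>
    exact Quotient.sound ((h f).trans (h g).symm)
  intro f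
  let q : (Fin (m + 1) → ℝ) → Fin m → I := fun z i =>
    projIcc 0 1 zero_le_one ((z i.succ + 1) / 2)
  have hq : Continuous q := continuous_pi fun i => continuous_projIcc.comp (by fun_prop)
  have hqb : ∀ z : Fin (m + 1) → ℝ, ‖z‖ = 1 → |z 0| ≠ 1 → f (q z) = e := by
    intro z hz h0
    obtain ⟨i, hi⟩ : ∃ i, ‖z i‖ = ‖z‖ := by
      obtain ⟨i, -, hi⟩ := Finset.exists_max_image Finset.univ (fun i => ‖z i‖) ⟨0, by simp⟩
      exact ⟨i, le_antisymm (norm_le_pi_norm _ _)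
        ((pi_norm_le_iff_of_nonneg (norm_nonneg _)).2 fun j => hi j (by simp))⟩
    rw [hz, Real.norm_eq_abs] at hi
    refine f.2 _ ?_
    induction i using Fin.cases with
    | zero => exact absurd hi h0
    | succ i =>
      refine ⟨i, ?_⟩
      rcases (abs_eq zero_le_one).1 hi with h | h
      · right
        simp only [q, h]
        norm_num [projIcc_eq_one]
      · left
        simp only [q, h]
        norm_num [projIcc_eq_zero]
  let φ : C(sphere (0 : Fin (m + 1) → ℝ) 1, X) :=
    ⟨fun z => if (1 / 2 : ℝ) ≤ (z : Fin (m + 1) → ℝ) 0 then f (q z) else e, by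
      refine Continuous.if_le (f.1.continuous.comp (hq.comp continuous_subtype_val))
        continuous_const continuous_const
        ((continuous_apply 0).comp continuous_subtype_val) fun z hz => ?_
      refine hqb z (by simp) ?_
      rw [← hz]
      norm_num [abs_eq]⟩
  obtain ⟨F, hF⟩ := exists_extension_of_nullhomotopic (hX φ)
  let c : I × (Fin m → I) → Fin (m + 1) → ℝ := fun p =>
    Fin.cons (1 - 2 * (p.1 : ℝ)) fun i => 2 * (p.2 i : ℝ) - 1
  have hc : Continuous c := by
    refine continuous_pi fun i => ?_
    induction i using Fin.cases with
    | zero => simp only [c, Fin.cons_zero]; fun_prop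
    | succ i => simp only [c, Fin.cons_succ]; fun_prop
  have hqc : ∀ p, q (c p) = p.2 := fun p => by
    ext i
    simp only [q, c, Fin.cons_succ]
    rw [show (2 * (p.2 i : ℝ) - 1 + 1) / 2 = p.2 i by ring, projIcc_val]
  have hcle : ∀ p, ‖c p‖ ≤ 1 := fun p => by
    refine (pi_norm_le_iff_of_nonneg zero_le_one).2 fun i => ?_
    rw [Real.norm_eq_abs, abs_le]
    induction i using Fin.cases with
    | zero =>
      have := p.1.2.1
      have := p.1.2.2
      simp only [c, Fin.cons_zero]
      constructor <;> linarith
    | succ i =>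
      have := (p.2 i).2.1
      have := (p.2 i).2.2
      simp only [c, Fin.cons_succ]
      constructor <;> linarith
  have hc1 : ∀ p i, |c p i| = 1 → ‖c p‖ = 1 := fun p i hi =>
    le_antisymm (hcle p) (hi ▸ norm_le_pi_norm (c p) i)
  have hFc : ∀ p, ‖c p‖ = 1 → F (c p) = if (1 / 2 : ℝ) ≤ c p 0 then f p.2 else e := fun p hp => by
    have := hF ⟨c p, by simpa using hp⟩
    rw [this]
    simp only [φ, ContinuousMap.coe_mk, hqc]
  refine ⟨⟨⟨⟨fun p => F (c p), F.continuous.comp hc⟩, fun y => ?_, fun y => ?_⟩, ?_⟩⟩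
  · change F (c (0, y)) = f y
    rw [hFc _ (hc1 _ 0 (by simp [c])), if_pos (by norm_num [c])]
  · change F (c (1, y)) = e
    rw [hFc _ (hc1 _ 0 (by norm_num [c])), if_neg (by norm_num [c])]
  · rintro t y ⟨i, hi⟩
    change F (c (t, y)) = f y
    rw [hFc _ (hc1 _ i.succ (by rcases hi with h | h <;> norm_num [c, h])),
      show f y = e from f.2 y ⟨i, hi⟩, ite_self]

/-- Every continuous map on the unit sphere of `ℝ^n` is a uniform limit of restrictions of
`C¹` maps. -/
theorem exists_contDiff_near_on_sphere {n ℓ k : ℕ}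
    (f : C(sphere (0 : Fin n → ℝ) 1, Fin ℓ → Fin k → ℝ)) {δ : ℝ} (hδ : 0 < δ) :
    ∃ g : (Fin n → ℝ) → Fin ℓ → Fin k → ℝ, ContDiff ℝ 1 g ∧
      ∀ x : sphere (0 : Fin n → ℝ) 1, dist (g x) (f x) < δ := by
  let A : Subalgebra ℝ C(sphere (0 : Fin n → ℝ) 1, ℝ) :=
    { carrier := {φ | ∃ ψ : (Fin n → ℝ) → ℝ, ContDiff ℝ 1 ψ ∧ ∀ x, φ x = ψ x}
      mul_mem' := by
        rintro _ _ ⟨ψ, h, h'⟩ ⟨ψ₁, h₁, h₁'⟩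
        exact ⟨ψ * ψ₁, h.mul h₁, fun x => by simp [h', h₁']⟩
      add_mem' := by
        rintro _ _ ⟨ψ, h, h'⟩ ⟨ψ₁, h₁, h₁'⟩
        exact ⟨ψ + ψ₁, h.add h₁, fun x => by simp [h', h₁']⟩
      algebraMap_mem' := fun r => ⟨fun _ => r, contDiff_const, fun x => by simp⟩ }
  have hA : A.SeparatesPoints := by
    intro x y hxy
    obtain ⟨i, hi⟩ : ∃ i, (x : Fin n → ℝ) i ≠ (y : Fin n → ℝ) i := by
      by_contra! h
      exact hxy (Subtype.ext (funext h))
    exact ⟨_, ⟨⟨fun z => (z : Fin n → ℝ) i, (continuous_apply i).comp continuous_subtype_val⟩,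
      ⟨fun z => z i, by fun_prop, fun _ => rfl⟩, rfl⟩, hi⟩
  have key : ∀ (j : Fin ℓ) (i : Fin k), ∃ ψ : (Fin n → ℝ) → ℝ, ContDiff ℝ 1 ψ ∧
      ∀ x : sphere (0 : Fin n → ℝ) 1, dist (ψ x) (f x j i) < δ := by
    intro j i
    obtain ⟨⟨φ, ψ, hψ, hφ⟩, h⟩ :=
      ContinuousMap.exists_mem_subalgebra_near_continuous_of_separatesPoints A hA
        (fun x => f x j i) (by fun_prop) δ hδ
    refine ⟨ψ, hψ, fun x => ?_⟩
    rw [← hφ, Real.dist_eq, ← Real.norm_eq_abs]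
    exact h x
  choose ψ hψ h using key
  refine ⟨fun x j i => ψ j i x, contDiff_pi.2 fun j => contDiff_pi.2 fun i => hψ j i, fun x => ?_⟩
  exact (dist_pi_lt_iff hδ).2 fun j => (dist_pi_lt_iff hδ).2 fun i => h j i x

/-- The complement of the cone spanned by finitely many `C¹` images of the unit sphere of
`ℝ^(m+1)` is dense in `ℝ^k` when `m + 1 < k`. -/
theorem dense_compl_cone_image_sphere {ι : Type*} [Countable ι] {m k : ℕ} (hmk : m + 1 < k)
    (g : ι → (Fin (m + 1) → ℝ) → Fin k → ℝ) (hg : ∀ a, ContDiff ℝ 1 (g a)) :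
    Dense {v : Fin k → ℝ | ∃ a, ∃ x ∈ sphere (0 : Fin (m + 1) → ℝ) 1, ∃ s : ℝ, v = s • g a x}ᶜ := by
  let G : ι × Fin (m + 1) × Bool → ℝ × (Fin m → ℝ) → Fin k → ℝ := fun q p =>
    p.1 • g q.1 (q.2.1.insertNth (if q.2.2 then 1 else -1) p.2)
  have hG : ∀ q, ContDiff ℝ 1 (G q) := fun q => by
    refine contDiff_fst.smul ((hg q.1).comp (contDiff_pi.2 fun i => ?_))
    induction i using q.2.1.succAboveCases with
    | x => simp only [Fin.insertNth_apply_same]; fun_prop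
    | p i => simp only [Fin.insertNth_apply_succAbove]; fun_prop
  have hdim : dimH (⋃ q, range (G q)) < Module.finrank ℝ (Fin k → ℝ) := by
    rw [dimH_iUnion]
    refine (iSup_le fun q => (hG q).dimH_range_le).trans_lt ?_
    simp only [Module.finrank_prod, Module.finrank_fin_fun, Module.finrank_self]
    exact_mod_cast (by omega : 1 + m < k)
  refine (dense_compl_of_dimH_lt_finrank hdim).mono (compl_subset_compl.2 ?_)
  rintro v ⟨a, x, hx, s, rfl⟩
  have hx : ‖x‖ = 1 := by simpa using hx
  obtain ⟨i, -, hi⟩ := Finset.exists_max_image Finset.univ (fun i => ‖x i‖) ⟨0, by simp⟩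
  have hi : |x i| = 1 := by
    rw [← hx]
    exact le_antisymm (norm_le_pi_norm x i)
      ((pi_norm_le_iff_of_nonneg (abs_nonneg _)).2 fun j => hi j (by simp))
  rw [mem_iUnion]
  rcases (abs_eq zero_le_one).1 hi with h | h
  · refine ⟨(a, i, true), (s, i.removeNth x), ?_⟩
    simp [G, ← h]
  · refine ⟨(a, i, false), (s, i.removeNth x), ?_⟩
    simp [G, ← h]

/-- A map from a compact space to an open set stays uniformly far from the complement. -/
theorem exists_forall_ball_subset {K E : Type*} [TopologicalSpace K] [CompactSpace K]
    [PseudoMetricSpace E] {U : Set E} (hU : IsOpen U) (f : C(K, U)) :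
    ∃ δ > 0, ∀ x, ball (f x : E) δ ⊆ U := by
  have hcomp : IsCompact (range fun x => (f x : E)) :=
    isCompact_range (continuous_subtype_val.comp f.continuous)
  obtain ⟨δ, hδ, hsub⟩ := hcomp.exists_thickening_subset_open hU
    (range_subset_iff.2 fun x => (f x).2)
  exact ⟨δ, hδ, fun x => (ball_subset_thickening (mem_range_self x) δ).trans hsub⟩

/-- Ordered configurations of `ℓ` distinct points in the open box `∏ (a i, b i)`. -/
def BoxConfig (k ℓ : ℕ) (a b : Fin k → ℝ) : Set (Fin ℓ → Fin k → ℝ) :=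
  {x | (∀ j i, a i < x j i ∧ x j i < b i) ∧ ∀ j j', j ≠ j' → x j ≠ x j'}

section

variable {k ℓ : ℕ} {a b : Fin k → ℝ}

theorem isOpen_boxConfig : IsOpen (BoxConfig k ℓ a b) := by
  simp only [BoxConfig, ofPred_and, ofPred_forall]
  refine IsOpen.inter ?_ ?_
  · refine isOpen_iInter_of_finite fun j => isOpen_iInter_of_finite fun i => ?_
    exact (isOpen_lt (by fun_prop) (by fun_prop)).inter (isOpen_lt (by fun_prop) (by fun_prop))
  · refine isOpen_iInter_of_finite fun j => isOpen_iInter_of_finite fun j' =>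
      isOpen_iInter_of_finite fun _ => ?_
    exact isOpen_ne_fun (by fun_prop) (by fun_prop)

/-- A scaled arithmetic progression centred at the middle of the box fits in the box. -/
theorem exists_progression_mem_box (ℓ : ℕ) (hab : ∀ i, a i < b i) (v : Fin k → ℝ) :
    ∃ p : Fin ℓ → Fin k → ℝ, (∀ j i, a i < p j i ∧ p j i < b i) ∧
      ∃ ε : ℝ, 0 < ε ∧ ∀ j j', p j - p j' = (ε * ((j : ℝ) - j')) • v := by
  let p : ℝ → Fin ℓ → Fin k → ℝ := fun ε j i => (a i + b i) / 2 + ε * j * v i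
  have hev : ∀ᶠ ε in 𝓝 (0 : ℝ), ∀ j i, a i < p ε j i ∧ p ε j i < b i := by
    refine Filter.eventually_all.2 fun j => Filter.eventually_all.2 fun i => ?_
    have hc : Continuous fun ε => p ε j i := by fun_prop
    have h1 : a i < p 0 j i := by simp only [p]; linarith [hab i]
    have h2 : p 0 j i < b i := by simp only [p]; linarith [hab i]
    exact (hc.continuousAt.eventually (lt_mem_nhds h1)).and
      (hc.continuousAt.eventually (gt_mem_nhds h2))
  obtain ⟨ε, h, hε⟩ := ((hev.filter_mono nhdsWithin_le_nhds).and
    (self_mem_nhdsWithin : Ioi (0 : ℝ) ∈ 𝓝[>] 0)).exists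
  refine ⟨p ε, h, ε, hε, fun j j' => ?_⟩
  ext i
  simp only [p, Pi.sub_apply, Pi.smul_apply, smul_eq_mul]
  ring

theorem boxConfig_nonempty (hk : 1 ≤ k) (hab : ∀ i, a i < b i) :
    (BoxConfig k ℓ a b).Nonempty := by
  obtain ⟨p, hp, ε, hε, h⟩ := exists_progression_mem_box ℓ hab 1
  refine ⟨p, hp, fun j j' hj he => ?_⟩
  have := congrFun (h j j') ⟨0, hk⟩
  simp [he, hε.ne', sub_eq_zero, Fin.val_inj, hj] at this

/-- The segment from a configuration `y` to a collinear configuration in a generic direction `v`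
consists of configurations. -/
theorem segment_subset_boxConfig {y p : Fin ℓ → Fin k → ℝ} {v : Fin k → ℝ} {ε : ℝ}
    (hy : y ∈ BoxConfig k ℓ a b) (hp : ∀ j i, a i < p j i ∧ p j i < b i) (hε : ε ≠ 0)
    (hpv : ∀ j j', p j - p j' = (ε * ((j : ℝ) - j')) • v)
    (hv : ∀ j j', ∀ s : ℝ, v ≠ s • (y j - y j')) : segment ℝ y p ⊆ BoxConfig k ℓ a b := by
  rintro _ ⟨s, t, hs, ht, hst, rfl⟩
  rcases ht.eq_or_lt with rfl | ht
  · obtain rfl : s = 1 := by linarith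
    simpa using hy
  refine ⟨fun j i => ?_, fun j j' hj he => hv j j' (-s / (t * (ε * (j - j')))) ?_⟩
  · obtain ⟨h1, h2⟩ := hy.1 j i
    obtain ⟨h3, h4⟩ := hp j i
    obtain rfl : s = 1 - t := by linarith
    simp only [Pi.add_apply, Pi.smul_apply, smul_eq_mul]
    constructor <;> nlinarith
  · have hj' : (j : ℝ) - j' ≠ 0 := by
      simpa [sub_eq_zero, Fin.val_inj] using hj
    have h0 : t * (ε * ((j : ℝ) - j')) ≠ 0 := by positivity
    have h2 : s • (y j - y j') + (t * (ε * ((j : ℝ) - j'))) • v = 0 := by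
      rw [mul_smul, ← hpv]
      simp only [Pi.add_apply, Pi.smul_apply] at he
      rw [smul_sub, smul_sub, sub_add_sub_comm, he, sub_self]
    rw [div_eq_inv_mul, mul_smul, eq_inv_smul_iff₀ h0, neg_smul, eq_neg_iff_add_eq_zero,
      add_comm]
    exact h2

/-- Configurations in a `k`-dimensional open box form a `(k - 2)`-connected space. -/
theorem nullhomotopic_boxConfig {m : ℕ} (hmk : m + 1 < k) (hab : ∀ i, a i < b i)
    (f : C(sphere (0 : Fin (m + 1) → ℝ) 1, BoxConfig k ℓ a b)) : f.Nullhomotopic := by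
  obtain ⟨δ, hδ, hball⟩ := exists_forall_ball_subset isOpen_boxConfig f
  obtain ⟨g, hg, hgf⟩ := exists_contDiff_near_on_sphere
    ⟨fun x => (f x : Fin ℓ → Fin k → ℝ), continuous_subtype_val.comp f.continuous⟩ hδ
  let g' : C(sphere (0 : Fin (m + 1) → ℝ) 1, BoxConfig k ℓ a b) :=
    ⟨fun x => ⟨g x, hball x (hgf x)⟩,
      (hg.continuous.comp continuous_subtype_val).subtype_mk _⟩
  have h1 : f.Homotopic g' := homotopic_of_segment_subset _ _ fun x =>
    ((convex_ball _ _).segment_subset (mem_ball_self hδ) (hgf x)).trans (hball x)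
  obtain ⟨v, hv⟩ := (dense_compl_cone_image_sphere hmk
    (fun (q : Fin ℓ × Fin ℓ) x => g x q.1 - g x q.2) fun q =>
      (contDiff_pi.1 hg q.1).sub (contDiff_pi.1 hg q.2)).nonempty
  obtain ⟨p, hp, ε, hε, hpv⟩ := exists_progression_mem_box ℓ hab v
  have hseg : ∀ x : sphere (0 : Fin (m + 1) → ℝ) 1,
      segment ℝ (g x) p ⊆ BoxConfig k ℓ a b := fun x =>
    segment_subset_boxConfig (g' x).2 hp hε.ne' hpv fun j j' s h => hv ⟨(j, j'), x, x.2, s, h⟩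
  have hx₀ : (sphere (0 : Fin (m + 1) → ℝ) 1).Nonempty :=
    NormedSpace.sphere_nonempty.2 zero_le_one
  obtain ⟨x₀, hx₀⟩ := hx₀
  refine ⟨⟨p, hseg ⟨x₀, hx₀⟩ (right_mem_segment ℝ _ _)⟩, h1.trans ?_⟩
  exact homotopic_of_segment_subset _ _ hseg

theorem mem_boxTuples_of_le {t t' : Fin ℓ → (Fin k → ℝ) × (Fin k → ℝ)}
    (ht : t ∈ BoxTuples k ℓ a b) (h : ∀ j i, (t' j).1 i < (t' j).2 i)
    (hl : ∀ j, (t j).1 ≤ (t' j).1) (hr : ∀ j, (t' j).2 ≤ (t j).2) : t' ∈ BoxTuples k ℓ a b :=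
  ⟨h, fun j => (Icc_subset_Icc (hl j) (hr j)).trans (ht.2.1 j), fun i j hij =>
    (ht.2.2 i j hij).mono (Icc_subset_Icc (hl i) (hr i)) (Icc_subset_Icc (hl j) (hr j))⟩

/-- Two families of box tuples are homotopic if the boxes of the second one are contained in the
corresponding boxes of the first one. -/
theorem homotopic_of_boxes_subset {Y : Type*} [TopologicalSpace Y] (f g : C(Y, BoxTuples k ℓ a b))
    (hl : ∀ y j, ((f y).1 j).1 ≤ ((g y).1 j).1) (hr : ∀ y j, ((g y).1 j).2 ≤ ((f y).1 j).2) :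
    f.Homotopic g := by
  refine homotopic_of_segment_subset f g fun y => ?_
  rintro _ ⟨s, t, hs, ht, hst, rfl⟩
  obtain rfl : s = 1 - t := by linarith
  refine mem_boxTuples_of_le (f y).2 (fun j i => ?_) (fun j i => ?_) fun j i => ?_ <;>
    have h1 := hl y j i <;> have h2 := hr y j i <;> have h3 := (g y).2.1 j i <;>
    simp only [Pi.add_apply, Pi.smul_apply, Prod.fst_add, Prod.snd_add, Prod.smul_fst,
      Prod.smul_snd, smul_eq_mul] <;> nlinarith

/-- The half-width of the boxes thickening a configuration. -/
noncomputable def boxRadius (a b : Fin k → ℝ) (x : Fin ℓ → Fin k → ℝ) : ℝ :=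
  infDist x (BoxConfig k ℓ a b)ᶜ / 2

theorem boxRadius_pos (hk : 1 ≤ k) {x : Fin ℓ → Fin k → ℝ} (hx : x ∈ BoxConfig k ℓ a b)
    (j : Fin ℓ) : 0 < boxRadius a b x := by
  have hne : (BoxConfig k ℓ a b)ᶜ.Nonempty :=
    ⟨fun _ => b, fun h => (h.1 j ⟨0, hk⟩).2.false⟩
  have h : 0 < infDist x (BoxConfig k ℓ a b)ᶜ :=
    (isOpen_boxConfig.isClosed_compl.notMem_iff_infDist_pos hne).1 fun h => h hx
  exact half_pos h

/-- Moving the points of a configuration by at most the radius gives a configuration. -/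
theorem mem_boxConfig_of_abs_sub_le (hk : 1 ≤ k) {x y : Fin ℓ → Fin k → ℝ}
    (hx : x ∈ BoxConfig k ℓ a b) (h : ∀ j i, |y j i - x j i| ≤ boxRadius a b x) :
    y ∈ BoxConfig k ℓ a b := by
  rcases isEmpty_or_nonempty (Fin ℓ) with hℓ | ⟨⟨j⟩⟩
  · rwa [Subsingleton.elim y x]
  have hr := boxRadius_pos hk hx j
  refine ball_infDist_compl_subset (x := x) ?_
  rw [mem_ball]
  refine lt_of_le_of_lt ?_ (show boxRadius a b x < _ by rw [boxRadius] at hr ⊢; linarith)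
  exact (dist_pi_le_iff hr.le).2 fun j => (dist_pi_le_iff hr.le).2 fun i => h j i

theorem thicken_mem_boxTuples (hk : 1 ≤ k) {x : Fin ℓ → Fin k → ℝ} (hx : x ∈ BoxConfig k ℓ a b) :
    (fun j => (fun i => x j i - boxRadius a b x, fun i => x j i + boxRadius a b x)) ∈
      BoxTuples k ℓ a b := by
  have habs : ∀ j (z : Fin k → ℝ), z ∈ Icc (fun i => x j i - boxRadius a b x)
      (fun i => x j i + boxRadius a b x) → ∀ i, |z i - x j i| ≤ boxRadius a b x := by
    intro j z hz i
    have h1 := hz.1 i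
    have h2 := hz.2 i
    simp only at h1 h2
    rw [abs_le]
    constructor <;> linarith
  refine ⟨fun j i => ?_, fun j z hz => ?_, fun j j' hj => disjoint_left.2 fun z hz hz' => ?_⟩
  · have := boxRadius_pos hk hx j
    simp only
    linarith
  · have h := (mem_boxConfig_of_abs_sub_le (y := Function.update x j z) hk hx fun j' i => by
      rcases eq_or_ne j' j with rfl | hj
      · simpa using habs _ z hz i
      · simpa [hj] using (boxRadius_pos hk hx j).le).1 j
    simp only [Function.update_self] at h
    exact ⟨fun i => (h i).1.le, fun i => (h i).2.le⟩
  · have h := (mem_boxConfig_of_abs_sub_le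
      (y := Function.update (Function.update x j z) j' z) hk hx fun i₁ i => by
        rcases eq_or_ne i₁ j' with rfl | h'
        · simpa using habs _ z hz' i
        rcases eq_or_ne i₁ j with rfl | h
        · simpa [h'] using habs _ z hz i
        · simpa [h, h'] using (boxRadius_pos hk hx j).le).2 j j' hj
    simp [hj] at h

theorem center_mem_boxConfig {t : Fin ℓ → (Fin k → ℝ) × (Fin k → ℝ)}
    (ht : t ∈ BoxTuples k ℓ a b) :
    (fun j i => ((t j).1 i + (t j).2 i) / 2) ∈ BoxConfig k ℓ a b := by
  have hmem : ∀ j, (fun i => ((t j).1 i + (t j).2 i) / 2) ∈ Icc (t j).1 (t j).2 := fun j =>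
    ⟨fun i => by have := ht.1 j i; simp only; linarith,
      fun i => by have := ht.1 j i; simp only; linarith⟩
  refine ⟨fun j i => ?_, fun j j' hj he => ?_⟩
  · have h := ht.1 j i
    obtain ⟨h1, h2⟩ := (Icc_subset_Icc_iff fun i => (ht.1 j i).le).1 (ht.2.1 j)
    have h1 := h1 i
    have h2 := h2 i
    constructor <;> linarith
  · exact disjoint_left.1 (ht.2.2 j j' hj) (hmem j) (by simp only at he; rw [he]; exact hmem j')

theorem continuous_boxRadius : Continuous (boxRadius a b : (Fin ℓ → Fin k → ℝ) → ℝ) :=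
  (continuous_infDist_pt _).div_const 2

/-- Replacing each point of a configuration by the cube around it whose half-width is the radius. -/
noncomputable def thicken (hk : 1 ≤ k) : C(BoxConfig k ℓ a b, BoxTuples k ℓ a b) where
  toFun x := ⟨_, thicken_mem_boxTuples hk x.2⟩
  continuous_toFun := by
    have := continuous_boxRadius (a := a) (b := b) (ℓ := ℓ)
    have hc : Continuous fun x : Fin ℓ → Fin k → ℝ => fun j =>
      (fun i => x j i - boxRadius a b x, fun i => x j i + boxRadius a b x) := by fun_prop
    exact (hc.comp continuous_subtype_val).subtype_mk _

/-- The configuration of the centres of a tuple of boxes. -/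
noncomputable def centers : C(BoxTuples k ℓ a b, BoxConfig k ℓ a b) where
  toFun t := ⟨_, center_mem_boxConfig t.2⟩
  continuous_toFun := by
    have hc : Continuous fun (t : Fin ℓ → (Fin k → ℝ) × (Fin k → ℝ)) j i =>
      ((t j).1 i + (t j).2 i) / 2 := by fun_prop
    exact (hc.comp continuous_subtype_val).subtype_mk _

theorem homotopic_thicken_comp_centers (hk : 1 ≤ k) :
    (ContinuousMap.id (BoxTuples k ℓ a b)).Homotopic ((thicken hk).comp centers) := by
  have hlt : ∀ (t : BoxTuples k ℓ a b) j i,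
      max ((t.1 j).1 i) ((((thicken hk).comp centers) t).1 j |>.1 i) <
        min ((t.1 j).2 i) ((((thicken hk).comp centers) t).1 j |>.2 i) := by
    intro t j i
    have h := t.2.1 j i
    have hr := boxRadius_pos hk (centers t).2 j
    simp only [max_lt_iff, lt_min_iff, ContinuousMap.comp_apply, thicken, centers,
      ContinuousMap.coe_mk] at hr ⊢
    refine ⟨⟨h, ?_⟩, ?_, ?_⟩ <;> linarith
  have hc : Continuous fun q : (Fin ℓ → (Fin k → ℝ) × (Fin k → ℝ)) ×
      (Fin ℓ → (Fin k → ℝ) × (Fin k → ℝ)) => fun j =>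
      ((fun i => max ((q.1 j).1 i) ((q.2 j).1 i), fun i => min ((q.1 j).2 i) ((q.2 j).2 i)) :
        (Fin k → ℝ) × (Fin k → ℝ)) := by fun_prop
  let μ : C(BoxTuples k ℓ a b, BoxTuples k ℓ a b) :=
    ⟨fun t => ⟨fun j => (fun i => max ((t.1 j).1 i) ((((thicken hk).comp centers) t).1 j |>.1 i),
      fun i => min ((t.1 j).2 i) ((((thicken hk).comp centers) t).1 j |>.2 i)),
      mem_boxTuples_of_le t.2 (hlt t) (fun j i => le_max_left _ _) fun j i => min_le_left _ _⟩,
      (hc.comp (continuous_subtype_val.prodMk (continuous_subtype_val.comp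
        ((thicken hk).comp centers).continuous))).subtype_mk _⟩
  have h1 : (ContinuousMap.id (BoxTuples k ℓ a b)).Homotopic μ :=
    homotopic_of_boxes_subset _ _ (fun t j i => le_max_left _ _) fun t j i => min_le_left _ _
  have h2 : ((thicken hk).comp centers).Homotopic μ :=
    homotopic_of_boxes_subset _ _ (fun t j i => le_max_right _ _) fun t j i => min_le_right _ _
  exact h1.trans h2.symm

theorem nullhomotopic_boxTuples {m : ℕ} (hmk : m + 1 < k) (hab : ∀ i, a i < b i)
    (f : C(sphere (0 : Fin (m + 1) → ℝ) 1, BoxTuples k ℓ a b)) : f.Nullhomotopic := by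
  have hk : 1 ≤ k := by omega
  obtain ⟨y, hy⟩ := (nullhomotopic_boxConfig hmk hab (centers.comp f)).comp_right (thicken hk)
  exact ⟨y, ((homotopic_thicken_comp_centers hk).comp (.refl f)).trans hy⟩

end

/-- The space `E(B, ℓ)` of `ℓ`-tuples of pairwise disjoint sub-boxes of a
nondegenerate box `B ⊆ ℝ^k` is `(k-2)`-connected: it is nonempty, path connected
when `k ≥ 2`, and its homotopy groups `π_m` vanish for `1 ≤ m ≤ k - 2`. -/
theorem statement13 (k ℓ : ℕ) (hk : 1 ≤ k) (a b : Fin k → ℝ)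
    (hab : ∀ i, a i < b i) :
    (BoxTuples k ℓ a b).Nonempty ∧
    (2 ≤ k → PathConnectedSpace (BoxTuples k ℓ a b)) ∧
    (∀ e : BoxTuples k ℓ a b, ∀ m : ℕ, 1 ≤ m → m ≤ k - 2 →
      Subsingleton (HomotopyGroup (Fin m) (BoxTuples k ℓ a b) e)) := by
  have hne : (BoxTuples k ℓ a b).Nonempty := by
    obtain ⟨x, hx⟩ := boxConfig_nonempty (ℓ := ℓ) hk hab
    exact ⟨_, thicken_mem_boxTuples hk hx⟩
  refine ⟨hne, fun h2 => ?_, fun e m hm hmk => ?_⟩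
  · obtain ⟨e, he⟩ := hne
    have := subsingleton_homotopyGroup_of_nullhomotopic 0
      (fun f => nullhomotopic_boxTuples (ℓ := ℓ) (by omega) hab f) ⟨e, he⟩
    exact pathConnectedSpace_iff_zerothHomotopy.2
      ⟨⟨Quotient.mk _ ⟨e, he⟩⟩,
        (HomotopyGroup.pi0EquivZerothHomotopy (x := ⟨e, he⟩)).symm.subsingleton⟩
  · exact subsingleton_homotopyGroup_of_nullhomotopic m
      (fun f => nullhomotopic_boxTuples (by omega) hab f) e
end

section
/- Fix k ≥ 1 and ℓ ≥ 0. The ordered configuration space of ℓ points in ℝ^k, i.e., the subspace {f : Fin ℓ → ℝ^k : f is injective} of (ℝ^k)^ℓ, is (k−2)-connected: it is nonempty; if k ≥ 2 it is path-connected; and for every basepoint f and every 1 ≤ m ≤ k−2, the homotopy group π_m of this space at f is trivial. -/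
/-- The ordered configuration space of `ℓ` points in `ℝ^k`: the subspace of
injective functions `Fin ℓ → ℝ^k` of the product space `(ℝ^k)^ℓ`. -/
def ConfigSpace (k ℓ : ℕ) : Set (Fin ℓ → (Fin k → ℝ)) :=
  {f | Function.Injective f}

open scoped unitInterval Topology ContDiff

theorem isOpen_configSpace (k ℓ : ℕ) : IsOpen (ConfigSpace k ℓ) := by
  have h : ConfigSpace k ℓ = ⋂ i : Fin ℓ, ⋂ j : Fin ℓ, {f | i ≠ j → f i ≠ f j} := by
    ext f
    simp only [ConfigSpace, Set.mem_ofPred_eq, Set.mem_iInter, Function.Injective, ne_eq]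
    exact forall₂_congr fun i j => not_imp_not.symm
  rw [h]
  refine isOpen_iInter_of_finite fun i => isOpen_iInter_of_finite fun j => ?_
  by_cases hij : i = j
  · simp [hij]
  · simpa [hij] using (isOpen_ne_fun (continuous_apply i) (continuous_apply j) :
      IsOpen {f : Fin ℓ → Fin k → ℝ | f i ≠ f j})

theorem configSpace_nonempty {k : ℕ} (hk : 1 ≤ k) (ℓ : ℕ) : (ConfigSpace k ℓ).Nonempty := by
  refine ⟨fun i _ => (i : ℕ), fun i j h => ?_⟩
  have := congrFun h ⟨0, hk⟩
  simp only at this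
  exact Fin.ext (by exact_mod_cast this)

/-- General position: a `C¹` family of configurations of dimension less than `k` can be
translated, by multiples of one vector `v`, off the fat diagonal wherever the weight `φ` does not
vanish. -/
theorem exists_add_smul_mem_configSpace {k ℓ : ℕ} {E : Type*} [NormedAddCommGroup E]
    [NormedSpace ℝ E] [FiniteDimensional ℝ E] (hE : Module.finrank ℝ E < k)
    {F : E → Fin ℓ → Fin k → ℝ} (hF : ContDiff ℝ 1 F) {φ : E → ℝ} (hφ : ContDiff ℝ 1 φ) :
    ∃ v : Fin ℓ → Fin k → ℝ, ∀ e, φ e ≠ 0 → F e + φ e • v ∈ ConfigSpace k ℓ := by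
  rcases Nat.eq_zero_or_pos ℓ with rfl | hℓ
  · exact ⟨0, fun e _ => Function.injective_of_subsingleton _⟩
  let G (i j : Fin ℓ) (p : E × ({x : Fin ℓ // x ≠ i} → Fin k → ℝ)) : Fin ℓ → Fin k → ℝ :=
    fun x => if hx : x = i then
      (if hj : j = i then 0 else p.2 ⟨j, hj⟩) - (φ p.1)⁻¹ • (F p.1 i - F p.1 j) else p.2 ⟨x, hx⟩
  let S (i : Fin ℓ) : Set (E × ({x : Fin ℓ // x ≠ i} → Fin k → ℝ)) := {p | φ p.1 ≠ 0}
  have hG (i j : Fin ℓ) : dimH (G i j '' S i) < (ℓ * k : ℕ) := by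
    have h1 : dimH (G i j '' S i) ≤ dimH (S i) := by
      refine dimH_image_le_of_locally_lipschitzOn fun p hp => ?_
      have hc : ContDiffAt ℝ 1 (G i j) p := by
        rw [contDiffAt_pi]
        intro x
        have hφinv : ContDiffAt ℝ 1
            (fun p : E × ({x : Fin ℓ // x ≠ i} → Fin k → ℝ) => (φ p.1)⁻¹) p :=
          (hφ.comp contDiff_fst).contDiffAt.inv hp
        have hFx (y : Fin ℓ) : ContDiffAt ℝ 1
            (fun p : E × ({x : Fin ℓ // x ≠ i} → Fin k → ℝ) => F p.1 y) p :=
          ((contDiff_pi.1 hF y).comp contDiff_fst).contDiffAt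
        have hsnd (y : {x : Fin ℓ // x ≠ i}) : ContDiffAt ℝ 1
            (fun p : E × ({x : Fin ℓ // x ≠ i} → Fin k → ℝ) => p.2 y) p :=
          ((contDiff_apply ℝ _ y).comp contDiff_snd).contDiffAt
        by_cases hx : x = i
        · simp only [G, hx, dite_true]
          refine ContDiffAt.sub ?_ (hφinv.smul ((hFx i).sub (hFx j)))
          by_cases hj : j = i
          · simpa only [hj, dite_true] using contDiffAt_const
          · simpa only [hj, dite_false] using hsnd ⟨j, hj⟩
        · simpa only [G, hx, dite_false] using hsnd ⟨x, hx⟩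
      obtain ⟨K, t, ht, h⟩ := hc.exists_lipschitzOnWith
      exact ⟨K, t, mem_nhdsWithin_of_mem_nhds ht, h⟩
    refine (h1.trans (dimH_mono (Set.subset_univ _))).trans_lt ?_
    rw [Real.dimH_univ_eq_finrank, Nat.cast_lt, Module.finrank_prod, Module.finrank_pi_fintype]
    simp only [Module.finrank_fin_fun, Finset.sum_const, Finset.card_univ, smul_eq_mul,
      Fintype.card_subtype_compl, Fintype.card_fin, Fintype.card_unique]
    obtain ⟨n, rfl⟩ : ∃ n, ℓ = n + 1 := ⟨ℓ - 1, by omega⟩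
    rw [Nat.add_sub_cancel, Nat.succ_mul]
    omega
  have hU : dimH (⋃ q : Fin ℓ × Fin ℓ, G q.1 q.2 '' S q.1) <
      Module.finrank ℝ (Fin ℓ → Fin k → ℝ) := by
    have hfin : Module.finrank ℝ (Fin ℓ → Fin k → ℝ) = ℓ * k := by
      rw [Module.finrank_pi_fintype]; simp
    have : Nonempty (Fin ℓ) := ⟨⟨0, hℓ⟩⟩
    rw [dimH_iUnion, hfin]
    obtain ⟨q, hq⟩ := Finite.exists_max fun q : Fin ℓ × Fin ℓ => dimH (G q.1 q.2 '' S q.1)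
    exact (iSup_le hq).trans_lt (hG q.1 q.2)
  obtain ⟨v, hv⟩ := (dense_compl_of_dimH_lt_finrank hU).nonempty
  refine ⟨v, fun e he i j hij => ?_⟩
  by_contra hne
  refine hv (Set.mem_iUnion.2 ⟨(i, j), (e, fun x => v x), he, ?_⟩)
  have hji : j ≠ i := fun h => hne h.symm
  funext x
  by_cases hx : x = i
  · subst hx
    simp only [Pi.add_apply, Pi.smul_apply] at hij
    have : φ e • (v j - v x) = F e x - F e j := by
      rw [smul_sub, sub_eq_sub_iff_add_eq_add, add_comm, ← hij]
    simp only [G, dite_true, hji, dite_false]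
    rw [← this, inv_smul_smul₀ he, sub_sub_cancel]
  · simp [G, hx]

/-- Two configurations are joined by a perturbed segment. -/
theorem pathConnectedSpace_configSpace {k : ℕ} (hk : 2 ≤ k) (ℓ : ℕ) :
    PathConnectedSpace (ConfigSpace k ℓ) := by
  refine ⟨(configSpace_nonempty (by omega) ℓ).to_subtype, fun a b => ?_⟩
  obtain ⟨v, hv⟩ := exists_add_smul_mem_configSpace (k := k) (ℓ := ℓ) (E := ℝ)
    (by rw [Module.finrank_self]; omega)
    (F := fun t => (1 - t) • a.1 + t • b.1) (by fun_prop)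
    (φ := fun t => t * (1 - t)) (by fun_prop)
  have hmem (t : ℝ) :
      (1 - t) • a.1 + t • b.1 + (t * (1 - t)) • v ∈ ConfigSpace k ℓ := by
    by_cases ht : t * (1 - t) = 0
    · rcases mul_eq_zero.1 ht with h | h
      · simp [h]
      · obtain rfl : t = 1 := by linarith
        simp
    · exact hv t ht
  exact ⟨⟨⟨fun t : I => ⟨_, hmem t⟩, by fun_prop⟩, by ext1; simp, by ext1; simp⟩⟩

/-- The polynomial `∏ xᵢ (1 - xᵢ)`, whose zero set in the cube is the boundary of the cube. -/
def cubeBump {m : ℕ} (x : Fin m → ℝ) : ℝ := ∏ i, x i * (1 - x i)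

theorem contDiff_cubeBump {m : ℕ} {n : ℕ∞ω} : ContDiff ℝ n (cubeBump (m := m)) := by
  unfold cubeBump
  fun_prop

theorem cubeBump_eq_zero_iff {m : ℕ} (x : Fin m → I) :
    cubeBump (fun i => (x i : ℝ)) = 0 ↔ x ∈ Cube.boundary (Fin m) := by
  simp only [cubeBump, Finset.prod_eq_zero_iff, Finset.mem_univ, true_and, mul_eq_zero,
    sub_eq_zero, Cube.boundary, Set.mem_ofPred_eq]
  refine exists_congr fun i => or_congr ?_ ?_
  · rw [← Set.Icc.coe_zero, Subtype.coe_inj]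
  · rw [eq_comm, ← Set.Icc.coe_one, Subtype.coe_inj]

theorem abs_cubeBump_le_one {m : ℕ} (x : Fin m → I) : |cubeBump (fun i => (x i : ℝ))| ≤ 1 := by
  rw [cubeBump, Finset.abs_prod]
  refine Finset.prod_le_one (fun i _ => abs_nonneg _) fun i _ => ?_
  have h0 := (x i).2.1
  have h1 := (x i).2.2
  rw [abs_of_nonneg (mul_nonneg h0 (by linarith))]
  nlinarith

/-- The subalgebra of continuous functions on the cube that extend to `C¹` functions. -/
def cubeContDiffSubalgebra (m : ℕ) : Subalgebra ℝ C(Fin m → I, ℝ) where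
  carrier := {p | ∃ P : (Fin m → ℝ) → ℝ, ContDiff ℝ 1 P ∧ ∀ x, p x = P fun i => x i}
  mul_mem' := by
    rintro p q ⟨P, hP, hp⟩ ⟨Q, hQ, hq⟩
    exact ⟨fun x => P x * Q x, hP.mul hQ, fun x => by simp [hp, hq]⟩
  add_mem' := by
    rintro p q ⟨P, hP, hp⟩ ⟨Q, hQ, hq⟩
    exact ⟨fun x => P x + Q x, hP.add hQ, fun x => by simp [hp, hq]⟩
  algebraMap_mem' r := ⟨fun _ => r, contDiff_const, fun x => by simp⟩

theorem separatesPoints_cubeContDiffSubalgebra (m : ℕ) :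
    (cubeContDiffSubalgebra m).SeparatesPoints := by
  intro x y hxy
  obtain ⟨i, hi⟩ := Function.ne_iff.1 hxy
  exact ⟨fun x => (x i : ℝ), ⟨⟨fun x => (x i : ℝ), by fun_prop⟩,
    ⟨fun x => x i, contDiff_apply ℝ ℝ i, fun _ => rfl⟩, rfl⟩, fun h => hi (Subtype.ext h)⟩

/-- A continuous function on the cube vanishing on the boundary is a uniform limit of multiples
of `cubeBump` by `C¹` functions. -/
theorem exists_contDiff_cubeBump_mul_near {m : ℕ} (h : C(Fin m → I, ℝ))
    (hb : ∀ x ∈ Cube.boundary (Fin m), h x = 0) {ε : ℝ} (hε : 0 < ε) :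
    ∃ P : (Fin m → ℝ) → ℝ, ContDiff ℝ 1 P ∧ ∀ x : Fin m → I,
      |cubeBump (fun i => (x i : ℝ)) * P (fun i => x i) - h x| < ε := by
  let b : C(Fin m → I, ℝ) := ⟨fun x => cubeBump fun i => (x i : ℝ),
    (contDiff_cubeBump (n := 0)).continuous.comp (by fun_prop)⟩
  have hmem : h ∈ (Ideal.span {b}).closure := by
    rw [← ContinuousMap.idealOfSet_ofIdeal_eq_closure, ContinuousMap.mem_idealOfSet]
    intro x hx
    refine hb x ((cubeBump_eq_zero_iff x).1 ?_)
    exact ContinuousMap.notMem_setOfIdeal.1 hx (Ideal.mem_span_singleton_self b)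
  obtain ⟨g, hg, hgh⟩ := Metric.mem_closure_iff.1 (show h ∈ closure (Ideal.span {b} : Set _) from
    hmem) (ε / 2) (half_pos hε)
  obtain ⟨q, rfl⟩ := Ideal.mem_span_singleton.1 hg
  obtain ⟨⟨p, P, hP, hp⟩, hpq⟩ :=
    ContinuousMap.exists_mem_subalgebra_near_continuousMap_of_separatesPoints _
      (separatesPoints_cubeContDiffSubalgebra m) q (ε / 2) (half_pos hε)
  refine ⟨P, hP, fun x => ?_⟩
  have h1 : |h x - b x * q x| < ε / 2 :=
    (ContinuousMap.dist_apply_le_dist (f := h) (g := b * q) x).trans_lt hgh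
  have h2 : |p x - q x| < ε / 2 := ((p - q).norm_coe_le_norm x).trans_lt hpq
  have h3 : |b x| ≤ 1 := abs_cubeBump_le_one x
  rw [← hp]
  change |b x * p x - h x| < ε
  calc |b x * p x - h x| = |b x * (p x - q x) - (h x - b x * q x)| := by ring_nf
    _ ≤ |b x * (p x - q x)| + |h x - b x * q x| := abs_sub _ _
    _ < ε / 2 + ε / 2 := by
      refine add_lt_add_of_le_of_lt ?_ h1 |>.trans_le le_rfl
      rw [abs_mul]
      nlinarith [abs_nonneg (p x - q x), abs_nonneg (b x)]
    _ = ε := add_halves ε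

/-- A family of configurations over `I × I^m` that is constant on the boundary of the cube gives a
homotopy of generalized loops. -/
theorem genLoop_homotopic_of_family {k ℓ m : ℕ} {f : ConfigSpace k ℓ}
    (p q : GenLoop (Fin m) (ConfigSpace k ℓ) f)
    (H : I × (Fin m → I) → Fin ℓ → Fin k → ℝ) (hH : Continuous H)
    (hmem : ∀ z, H z ∈ ConfigSpace k ℓ) (h0 : ∀ x, H (0, x) = p x) (h1 : ∀ x, H (1, x) = q x)
    (hb : ∀ t, ∀ x ∈ Cube.boundary (Fin m), H (t, x) = f) : GenLoop.Homotopic p q :=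
  ⟨⟨⟨⟨fun z => ⟨H z, hmem z⟩, by fun_prop⟩, fun x => Subtype.ext (h0 x),
    fun x => Subtype.ext (h1 x)⟩, fun t x hx => Subtype.ext <|
      (hb t x hx).trans (congrArg Subtype.val (p.2 x hx)).symm⟩⟩

/-- Every generalized loop is homotopic to one of the form `f + cubeBump • P` with `P` of class
`C¹`. -/
theorem exists_homotopic_contDiff {k ℓ m : ℕ} {f : ConfigSpace k ℓ}
    (g : GenLoop (Fin m) (ConfigSpace k ℓ) f) :
    ∃ P : (Fin m → ℝ) → Fin ℓ → Fin k → ℝ, ContDiff ℝ 1 P ∧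
      ∃ p : GenLoop (Fin m) (ConfigSpace k ℓ) f, GenLoop.Homotopic g p ∧
        ∀ x, (p x : Fin ℓ → Fin k → ℝ) =
          f + cubeBump (fun i => (x i : ℝ)) • P fun i => x i := by
  have hgc : Continuous fun x => (g x : Fin ℓ → Fin k → ℝ) := by fun_prop
  have hcpt : IsCompact (Set.range fun x => (g x : Fin ℓ → Fin k → ℝ)) := isCompact_range hgc
  obtain ⟨ε, hε, hsub⟩ := hcpt.exists_thickening_subset_open (isOpen_configSpace k ℓ)
    (by rintro _ ⟨x, rfl⟩; exact (g x).2)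
  have hbd : ∀ x ∈ Cube.boundary (Fin m), g x = f := g.2
  choose P hP hPg using fun (i : Fin ℓ) (a : Fin k) =>
    exists_contDiff_cubeBump_mul_near
      (⟨fun x => (g x : Fin ℓ → Fin k → ℝ) i a - f.1 i a,
        ((continuous_apply_apply i a).comp hgc).sub continuous_const⟩ : C(Fin m → I, ℝ))
      (fun x hx => by simp [hbd x hx]) hε
  let Q : (Fin m → ℝ) → Fin ℓ → Fin k → ℝ := fun y i a => P i a y
  have hQ : ContDiff ℝ 1 Q := contDiff_pi.2 fun i => contDiff_pi.2 fun a => hP i a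
  let G : (Fin m → I) → Fin ℓ → Fin k → ℝ := fun x =>
    f + cubeBump (fun i => (x i : ℝ)) • Q fun i => x i
  have hGc : Continuous G :=
    continuous_const.add (((contDiff_cubeBump (n := 0)).continuous.comp (by fun_prop)).smul
      (hQ.continuous.comp (by fun_prop)))
  have hGb : ∀ x ∈ Cube.boundary (Fin m), G x = f := fun x hx => by
    simp only [G, (cubeBump_eq_zero_iff x).2 hx, zero_smul, add_zero]
  have hdist (x) : dist (G x) (g x) < ε := by
    refine (dist_pi_lt_iff hε).2 fun i => (dist_pi_lt_iff hε).2 fun a => ?_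
    have := hPg i a x
    rw [Real.dist_eq]
    convert this using 2
    simp only [G, Q, Pi.add_apply, Pi.smul_apply, smul_eq_mul, ContinuousMap.coe_mk]
    ring
  have hmem (t : I) (x) :
      AffineMap.lineMap (g x : Fin ℓ → Fin k → ℝ) (G x) (t : ℝ) ∈ ConfigSpace k ℓ := by
    refine hsub (Metric.mem_thickening_iff.2 ⟨_, ⟨x, rfl⟩, ?_⟩)
    rw [dist_lineMap_left, Real.norm_eq_abs, abs_of_nonneg t.2.1, dist_comm]
    exact (mul_le_of_le_one_left dist_nonneg t.2.2).trans_lt (hdist x)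
  refine ⟨Q, hQ, ⟨⟨fun x => ⟨G x, by simpa using hmem 1 x⟩, by fun_prop⟩,
    fun x hx => Subtype.ext (hGb x hx)⟩, ?_, fun x => rfl⟩
  refine genLoop_homotopic_of_family _ _
    (fun z => AffineMap.lineMap (g z.2 : Fin ℓ → Fin k → ℝ) (G z.2) (z.1 : ℝ)) ?_
    (fun z => hmem z.1 z.2) (fun x => by simp) (fun x => by simp; rfl) fun t x hx => ?_
  · simp only [AffineMap.lineMap_apply_module]
    fun_prop
  · simp [hbd x hx, hGb x hx]

/-- A generalized loop of the form `f + cubeBump • P` with `P` of class `C¹` is null-homotopic in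
dimensions `m` with `m + 1 < k`. -/
theorem homotopic_const_of_contDiff {k ℓ m : ℕ} (hm : m + 1 < k) {f : ConfigSpace k ℓ}
    (g : GenLoop (Fin m) (ConfigSpace k ℓ) f) {P : (Fin m → ℝ) → Fin ℓ → Fin k → ℝ}
    (hP : ContDiff ℝ 1 P) (hg : ∀ x, (g x : Fin ℓ → Fin k → ℝ) =
      f + cubeBump (fun i => (x i : ℝ)) • P fun i => x i) :
    GenLoop.Homotopic g GenLoop.const := by
  have hb : ContDiff ℝ 1 (cubeBump (m := m)) := contDiff_cubeBump
  let F : ℝ × (Fin m → ℝ) → Fin ℓ → Fin k → ℝ := fun e =>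
    f + ((1 - e.1) * cubeBump e.2) • P e.2
  let φ : ℝ × (Fin m → ℝ) → ℝ := fun e => e.1 * (1 - e.1) * cubeBump e.2
  have hF : ContDiff ℝ 1 F := by fun_prop
  have hφ : ContDiff ℝ 1 φ := by fun_prop
  obtain ⟨v, hv⟩ := exists_add_smul_mem_configSpace (k := k)
    (by rw [Module.finrank_prod]; simp; omega) hF hφ
  have hH1 (x : Fin m → I) : F (1, fun i => x i) + φ (1, fun i => x i) • v = f := by
    simp [F, φ]
  have hH0 (x : Fin m → I) : F (0, fun i => x i) + φ (0, fun i => x i) • v = g x := by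
    simp [F, φ, hg]
  have hHb (t : ℝ) (x) (hx : x ∈ Cube.boundary (Fin m)) :
      F (t, fun i => x i) + φ (t, fun i => x i) • v = f := by
    simp [F, φ, (cubeBump_eq_zero_iff x).2 hx]
  refine genLoop_homotopic_of_family _ _
    (fun z => F (z.1, fun i => z.2 i) + φ (z.1, fun i => z.2 i) • v) ?_ ?_
    (fun x => hH0 x) (fun x => hH1 x) fun t x hx => hHb t x hx
  · have := hF.continuous
    have := hφ.continuous
    fun_prop
  · rintro ⟨t, x⟩
    by_cases h : φ (t, fun i => x i) = 0
    · simp only [φ, mul_eq_zero] at h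
      rcases h with (h | h) | h
      · simp only [h]; rw [hH0]; exact (g x).2
      · obtain h : (t : ℝ) = 1 := by linarith
        simp only [h]; rw [hH1]; exact f.2
      · rw [hHb _ x ((cubeBump_eq_zero_iff x).1 h)]; exact f.2
    · exact hv _ h

theorem subsingleton_homotopyGroup_configSpace {k ℓ m : ℕ} (hm : m + 1 < k)
    (f : ConfigSpace k ℓ) : Subsingleton (HomotopyGroup (Fin m) (ConfigSpace k ℓ) f) := by
  refine subsingleton_of_forall_eq (Quotient.mk _ GenLoop.const) fun c => ?_
  induction c using Quotient.inductionOn with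
  | h g =>
    obtain ⟨P, hP, p, hp, hpP⟩ := exists_homotopic_contDiff g
    exact Quotient.sound (hp.trans (homotopic_const_of_contDiff hm p hP hpP))

/-- The ordered configuration space of `ℓ` points in `ℝ^k` is `(k-2)`-connected:
it is nonempty, path connected when `k ≥ 2`, and its homotopy groups `π_m` vanish
for `1 ≤ m ≤ k - 2`. -/
theorem statement14 (k ℓ : ℕ) (hk : 1 ≤ k) :
    (ConfigSpace k ℓ).Nonempty ∧
    (2 ≤ k → PathConnectedSpace (ConfigSpace k ℓ)) ∧
    (∀ f : ConfigSpace k ℓ, ∀ m : ℕ, 1 ≤ m → m ≤ k - 2 →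
      Subsingleton (HomotopyGroup (Fin m) (ConfigSpace k ℓ) f)) := by
  exact ⟨configSpace_nonempty hk ℓ, fun h => pathConnectedSpace_configSpace h ℓ,
    fun f m h1 h2 => subsingleton_homotopyGroup_configSpace (by omega) f⟩
end

section
/- Fix k ≥ 1, a finite set X with a nondegenerate closed axis-parallel box B_x ⊂ ℝ^k for each x ∈ X, a finite set A with a map s : A → X, and a subset A₀ ⊆ A with s₀ := s|_{A₀}. Let E°({B_x}, s) be the space of tuples (B_a)_{a∈A} of nondegenerate closed axis-parallel boxes such that each B_a is contained in the interior of B_{s(a)} and, for each x ∈ X, the boxes {B_a : s(a) = x} are pairwise disjoint; define E°({B_x}, s₀) analogously, and let ρ : E°({B_x}, s) → E°({B_x}, s₀) be the map forgetting the boxes labeled by A \ A₀. Then for every i ≤ k−1, given continuous maps h : S^{i−1} → E°({B_x}, s) and g : D^i → E°({B_x}, s₀) with ρ ∘ h equal to the restriction of g to S^{i−1}, there exists a continuous lift G : D^i → E°({B_x}, s) with ρ ∘ G = g and G restricted to S^{i−1} equal to h. -/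
/-- The space `E°({B_x}, s)` of tuples `(B_a)_{a ∈ A}` of nondegenerate closed
axis-parallel boxes in `ℝ^k` (parametrized by corner coordinates), each contained
in the interior of the ambient box `B_{s(a)} = Icc (Bc (s a)) (Bd (s a))`, and such
that for each `x ∈ X` the boxes labelled by `a` with `s a = x` are pairwise
disjoint.  It is topologized as a subspace of `((ℝ^k)²)^A`. -/
def OpenBoxTuples (k : ℕ) {X A : Type} (Bc Bd : X → (Fin k → ℝ)) (s : A → X) :
    Set (A → (Fin k → ℝ) × (Fin k → ℝ)) :=
  {t | (∀ a, ∀ i, (t a).1 i < (t a).2 i) ∧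
       (∀ a, Set.Icc (t a).1 (t a).2 ⊆
         interior (Set.Icc (Bc (s a)) (Bd (s a)))) ∧
       ∀ a a', a ≠ a' → s a = s a' →
         Disjoint (Set.Icc (t a).1 (t a).2) (Set.Icc (t a').1 (t a').2)}

open Set Topology

/-- General position: a family of continuous maps into a space of larger dimension can be
perturbed so that one of them avoids all the others. -/
theorem exists_approx_forall_ne {E F J : Type} [NormedAddCommGroup E] [NormedSpace ℝ E]
    [FiniteDimensional ℝ E] [NormedAddCommGroup F] [NormedSpace ℝ F] [FiniteDimensional ℝ F]
    [TietzeExtension.{0, 0} F] [Finite J]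
    (hEF : Module.finrank ℝ E < Module.finrank ℝ F) {D : Set E} (hD : IsCompact D)
    (m : J → C(D, F)) (p : C(D, F)) {ε : ℝ} (hε : 0 < ε) :
    ∃ (m' : J → C(D, F)) (p' : C(D, F)), (∀ j z, ‖m' j z - m j z‖ < ε) ∧
      (∀ z, ‖p' z - p z‖ < ε) ∧ ∀ j z, p' z ≠ m' j z := by
  have approx : ∀ f : C(D, F), ∀ δ > 0, ∃ f' : E → F, ContDiff ℝ 1 f' ∧
      ∀ z : D, ‖f' z - f z‖ < δ := by
    intro f δ hδ
    obtain ⟨f₁, hf₁⟩ := ContinuousMap.exists_restrict_eq hD.isClosed f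
    obtain ⟨f', hf', hdist, -⟩ := f₁.continuous.exists_contDiff_approx 1
      (ε := fun _ => δ) continuous_const (fun _ => hδ)
    refine ⟨f', hf', fun z => ?_⟩
    rw [← hf₁, ← dist_eq_norm]
    exact hdist z
  choose m' hm' hmm' using fun j => approx (m j) ε hε
  obtain ⟨p', hp', hpp'⟩ := approx p (ε / 2) (half_pos hε)
  have hdense : Dense (⋂ j, ((fun z => m' j z - p' z) '' D)ᶜ) := by
    refine dense_iInter_of_isOpen (fun j => ?_) fun j => ?_
    · exact (hD.image ((hm' j).continuous.sub hp'.continuous)).isClosed.isOpen_compl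
    · exact (((hm' j).sub hp').dense_compl_range_of_finrank_lt_finrank hEF).mono
        (compl_subset_compl.2 (image_subset_range _ _))
  obtain ⟨v, hv, hvε⟩ := hdense.exists_dist_lt 0 (half_pos hε)
  rw [dist_zero_left] at hvε
  refine ⟨fun j => ⟨fun z => m' j z, (hm' j).continuous.comp continuous_subtype_val⟩,
    ⟨fun z => p' z + v, (hp'.continuous.comp continuous_subtype_val).add continuous_const⟩,
    fun j z => hmm' j z, fun z => ?_, fun j z hne => ?_⟩
  · calc ‖p' z + v - p z‖ = ‖(p' z - p z) + v‖ := by congr 1; abel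
      _ ≤ ‖p' z - p z‖ + ‖v‖ := norm_add_le _ _
      _ < ε := by linarith [hpp' z]
  · refine mem_iInter.1 hv j ⟨z, z.2, ?_⟩
    change p' z + v = m' j z at hne
    simp [← hne]

/-- Two boxes are separated by more than `e` in some coordinate direction. -/
def BoxGap {k : ℕ} (e : ℝ) (a b c d : Fin k → ℝ) : Prop :=
  ∃ i, b i + e < c i ∨ d i + e < a i

/-- The box with corners `a`, `b` keeps distance more than `e` from the boundary of the ambient
box with corners `u`, `w` and from all boxes with corners `c j`, `d j`. -/
def BoxFree {k : ℕ} {J : Type} (e : ℝ) (u w a b : Fin k → ℝ) (c d : J → Fin k → ℝ) : Prop :=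
  (∀ i, u i + e < a i) ∧ (∀ i, b i + e < w i) ∧ ∀ j, BoxGap e a b (c j) (d j)

theorem BoxFree.thicken {k : ℕ} {J : Type} {e : ℝ} {u w a b a' b' : Fin k → ℝ}
    {c d : J → Fin k → ℝ} (hf : BoxFree e u w a b c d) (ha : ∀ i, a i - e ≤ a' i)
    (hb : ∀ i, b' i ≤ b i + e) : BoxFree 0 u w a' b' c d := by
  refine ⟨fun i => ?_, fun i => ?_, fun j => ?_⟩
  · linarith [hf.1 i, ha i]
  · linarith [hf.2.1 i, hb i]
  · obtain ⟨i, hi⟩ := hf.2.2 j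
    exact ⟨i, hi.imp (fun hi => by linarith [hb i]) fun hi => by linarith [ha i]⟩

theorem isOpen_setOf_boxFree {k : ℕ} {J Y : Type} [Finite J] [TopologicalSpace Y] {e : Y → ℝ}
    {u w a b : Y → Fin k → ℝ} {c d : J → Y → Fin k → ℝ} (he : Continuous e) (hu : Continuous u)
    (hw : Continuous w) (ha : Continuous a) (hb : Continuous b) (hc : ∀ j, Continuous (c j))
    (hd : ∀ j, Continuous (d j)) :
    IsOpen {y | BoxFree (e y) (u y) (w y) (a y) (b y) (fun j => c j y) fun j => d j y} := by
  simp only [BoxFree, BoxGap, ofPred_and, ofPred_forall, ofPred_exists, ofPred_or]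
  refine (isOpen_iInter_of_finite fun i => ?_).inter ((isOpen_iInter_of_finite fun i => ?_).inter
    (isOpen_iInter_of_finite fun j => isOpen_iUnion fun i => IsOpen.union ?_ ?_))
  all_goals exact isOpen_lt (by fun_prop) (by fun_prop)

theorem IsCompact.eventually_forall_of_isOpen {Y : Type} [TopologicalSpace Y] {K : Set Y}
    (hK : IsCompact K) {P : ℝ → Y → Prop} (hP : IsOpen {x : ℝ × Y | P x.1 x.2})
    (h0 : ∀ y ∈ K, P 0 y) : ∀ᶠ e in 𝓝 (0 : ℝ), ∀ y ∈ K, P e y :=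
  hK.eventually_forall_of_forall_eventually fun y hy => hP.mem_nhds (h0 y hy)

theorem disjoint_Icc_iff_boxGap {k : ℕ} {a b c d : Fin k → ℝ} (hab : ∀ i, a i < b i)
    (hcd : ∀ i, c i < d i) : Disjoint (Icc a b) (Icc c d) ↔ BoxGap 0 a b c d := by
  rw [disjoint_iff_inter_eq_empty, Icc_inter_Icc, Icc_eq_empty_iff, Pi.le_def, not_forall, BoxGap]
  refine exists_congr fun i => ?_
  have := hab i
  have := hcd i
  simp only [Pi.sup_apply, Pi.inf_apply, sup_le_iff, le_inf_iff, add_zero]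
  grind

theorem Icc_subset_interior_Icc_iff {k : ℕ} {a b u w : Fin k → ℝ} (hab : ∀ i, a i < b i) :
    Icc a b ⊆ interior (Icc u w) ↔ (∀ i, u i + 0 < a i) ∧ ∀ i, b i + 0 < w i := by
  have hint : interior (Icc u w) = univ.pi fun i => Ioo (u i) (w i) := by
    rw [← pi_univ_Icc, interior_pi_set finite_univ]
    simp only [interior_Icc]
  rw [hint]
  simp only [add_zero]
  constructor
  · intro hs
    have hle : a ≤ b := fun i => (hab i).le
    exact ⟨fun i => (hs (left_mem_Icc.2 hle) i trivial).1,
      fun i => (hs (right_mem_Icc.2 hle) i trivial).2⟩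
  · rintro ⟨hu, hw⟩ y hy i -
    exact ⟨(hu i).trans_le (hy.1 i), (hy.2 i).trans_lt (hw i)⟩

/-- A map avoiding the centres of a family of disjoint boxes can be pushed out of the
interiors of these boxes without changing it outside of them. -/
theorem exists_push_out {k : ℕ} {J Z : Type} [Finite J] [TopologicalSpace Z]
    {m R : J → Z → Fin k → ℝ} {p : Z → Fin k → ℝ} (hm : ∀ j, Continuous (m j))
    (hR : ∀ j, Continuous (R j)) (hp : Continuous p) (hR0 : ∀ j z i, 0 < R j z i)
    (hpm : ∀ j z, p z ≠ m j z)
    (hdisj : ∀ j j', j ≠ j' → ∀ z (y : Fin k → ℝ), (∀ i, |y i - m j z i| ≤ R j z i) →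
      ¬ ∀ i, |y i - m j' z i| ≤ R j' z i) :
    ∃ q : Z → Fin k → ℝ, Continuous q ∧
      (∀ z, q z = p z ∨ ∃ j, ∀ i, |q z i - m j z i| ≤ R j z i) ∧
      (∀ z j, ∃ i, R j z i ≤ |q z i - m j z i|) ∧
      ∀ z, (∀ j, ∃ i, R j z i ≤ |p z i - m j z i|) → q z = p z := by
  cases nonempty_fintype J
  let N : J → Z → (Fin k → ℝ) → ℝ := fun j z y => ‖fun i => (y i - m j z i) / R j z i‖
  have hN_le : ∀ j z y, N j z y ≤ 1 ↔ ∀ i, |y i - m j z i| ≤ R j z i := by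
    intro j z y
    simp only [N, pi_norm_le_iff_of_nonneg zero_le_one, norm_div, Real.norm_eq_abs,
      abs_of_pos (hR0 j z _), div_le_one (hR0 j z _)]
  have hN_ge : ∀ j z y, 1 ≤ N j z y ↔ ∃ i, R j z i ≤ |y i - m j z i| := by
    intro j z y
    rw [← not_iff_not, not_le]
    simp only [N, pi_norm_lt_iff zero_lt_one, norm_div, Real.norm_eq_abs,
      abs_of_pos (hR0 j z _), div_lt_one (hR0 j z _), not_exists, not_le]
  have hN_pos : ∀ j z, 0 < N j z (p z) := by
    intro j z
    refine norm_pos_iff.2 fun h0 => hpm j z (funext fun i => ?_)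
    have := congrFun h0 i
    simpa [div_eq_zero_iff, (hR0 j z i).ne', sub_eq_zero] using this
  have hN_cont : ∀ j, Continuous fun z => N j z (p z) := fun j =>
    (continuous_pi fun i => Continuous.div (by fun_prop) (by fun_prop)
      fun z => (hR0 j z i).ne').norm
  let q : Z → Fin k → ℝ := fun z =>
    p z + ∑ j, (max 1 (N j z (p z))⁻¹ - 1) • (p z - m j z)
  have hcoef : ∀ j z, 1 ≤ N j z (p z) → max 1 (N j z (p z))⁻¹ - 1 = 0 := fun j z h => by
    rw [max_eq_left (inv_le_one_of_one_le₀ h), sub_self]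
  have hq_out : ∀ z, (∀ j, 1 ≤ N j z (p z)) → q z = p z := by
    intro z hz
    simp only [q, hcoef _ z (hz _), zero_smul, Finset.sum_const_zero, add_zero]
  have hq_in : ∀ z j, N j z (p z) < 1 → N j z (q z) = 1 := by
    intro z j hj
    have hsum : q z = p z + ((N j z (p z))⁻¹ - 1) • (p z - m j z) := by
      simp only [q]
      rw [Finset.sum_eq_single j]
      · rw [max_eq_right (one_le_inv₀ (hN_pos j z) |>.2 hj.le)]
      · intro j' _ hne
        rw [hcoef j' z, zero_smul]
        by_contra! hlt
        exact hdisj j j' hne.symm z (p z) ((hN_le ..).1 hj.le) ((hN_le ..).1 hlt.le)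
      · simp
    have : (fun i => (q z i - m j z i) / R j z i) =
        (N j z (p z))⁻¹ • fun i => (p z i - m j z i) / R j z i := by
      funext i
      simp only [hsum, Pi.add_apply, Pi.smul_apply, Pi.sub_apply, smul_eq_mul]
      ring
    change ‖fun i => (q z i - m j z i) / R j z i‖ = 1
    rw [this, norm_smul, Real.norm_of_nonneg (inv_nonneg.2 (hN_pos j z).le)]
    exact inv_mul_cancel₀ (hN_pos j z).ne'
  refine ⟨q, ?_, fun z => ?_, fun z j => ?_, fun z hz => hq_out z fun j => (hN_ge ..).2 (hz j)⟩
  · refine hp.add (continuous_finsetSum _ fun j _ => Continuous.fun_smul ?_ (hp.sub (hm j)))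
    exact (continuous_const.max ((hN_cont j).inv₀ fun z => (hN_pos j z).ne')).sub continuous_const
  · by_cases hz : ∀ j, 1 ≤ N j z (p z)
    · exact Or.inl (hq_out z hz)
    · push Not at hz
      obtain ⟨j, hj⟩ := hz
      exact Or.inr ⟨j, (hN_le ..).1 (hq_in z j hj).le⟩
  · rw [← hN_ge]
    by_cases hz : ∀ j, 1 ≤ N j z (p z)
    · rw [hq_out z hz]
      exact hz j
    · push Not at hz
      obtain ⟨j', hj'⟩ := hz
      have hq1 := hq_in z j' hj'
      by_cases hjj : j' = j
      · exact hjj ▸ hq1.ge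
      · by_contra! hlt
        exact hdisj j' j hjj z (q z) ((hN_le ..).1 hq1.le) ((hN_le ..).1 hlt.le)

/-- Relative extension of a single box over a compact set of dimension less than `k`, in the
complement of a continuous family of disjoint boxes. -/
theorem exists_extend_box {E J : Type} [NormedAddCommGroup E] [NormedSpace ℝ E]
    [FiniteDimensional ℝ E] [Finite J] {k : ℕ} (hk : Module.finrank ℝ E < k) {D : Set E}
    (hD : IsCompact D) {S : Set D} (hS : IsClosed S) {u w : Fin k → ℝ} (huw : ∀ i, u i < w i)
    (c d : J → C(D, Fin k → ℝ)) (a b : C(D, Fin k → ℝ)) (hcd : ∀ j z i, c j z i < d j z i)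
    (hfree : ∀ j z, BoxFree 0 u w (c j z) (d j z) (fun j' : {j' // j' ≠ j} => c j' z)
      fun j' => d j' z)
    (hab : ∀ z ∈ S, ∀ i, a z i < b z i)
    (hS_free : ∀ z ∈ S, BoxFree 0 u w (a z) (b z) (fun j => c j z) fun j => d j z) :
    ∃ a' b' : C(D, Fin k → ℝ), (∀ z ∈ S, a' z = a z ∧ b' z = b z) ∧
      ∀ z, (∀ i, a' z i < b' z i) ∧
        BoxFree 0 u w (a' z) (b' z) (fun j => c j z) fun j => d j z := by
  have : CompactSpace D := isCompact_iff_compactSpace.1 hD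
  obtain ⟨ε, hε, hε_uw, hε_free, hε_S, hε_ab⟩ : ∃ ε > 0, (∀ i, u i + 4 * ε < w i) ∧
      (∀ j z, BoxFree (4 * ε) u w (c j z) (d j z) (fun j' : {j' // j' ≠ j} => c j' z)
        fun j' => d j' z) ∧
      (∀ z ∈ S, BoxFree (4 * ε) u w (a z) (b z) (fun j => c j z) fun j => d j z) ∧
      ∀ z ∈ S, ∀ i, a z i + 4 * ε < b z i := by
    have h1 : ∀ᶠ e in 𝓝 (0 : ℝ), ∀ i, u i + e < w i := by
      refine Filter.eventually_all.2 fun i => ?_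
      exact (isOpen_lt (f := fun e => u i + e) (by fun_prop) continuous_const).mem_nhds
        (by simpa using huw i)
    have h2 : ∀ᶠ e in 𝓝 (0 : ℝ), ∀ j, ∀ z ∈ (univ : Set D), BoxFree e u w (c j z) (d j z)
        (fun j' : {j' // j' ≠ j} => c j' z) fun j' => d j' z := by
      refine Filter.eventually_all.2 fun j => isCompact_univ.eventually_forall_of_isOpen ?_
        fun z _ => hfree j z
      apply isOpen_setOf_boxFree (c := fun (j' : {j' // j' ≠ j}) (y : ℝ × D) => c j' y.2)
        (d := fun (j' : {j' // j' ≠ j}) (y : ℝ × D) => d j' y.2)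
      all_goals fun_prop
    have h3 : ∀ᶠ e in 𝓝 (0 : ℝ), ∀ z ∈ S,
        BoxFree e u w (a z) (b z) (fun j => c j z) fun j => d j z := by
      refine hS.isCompact.eventually_forall_of_isOpen ?_ hS_free
      apply isOpen_setOf_boxFree (c := fun j (y : ℝ × D) => c j y.2)
        (d := fun j (y : ℝ × D) => d j y.2)
      all_goals fun_prop
    have h4 : ∀ᶠ e in 𝓝 (0 : ℝ), ∀ i, ∀ z ∈ S, a z i + e < b z i := by
      refine Filter.eventually_all.2 fun i => hS.isCompact.eventually_forall_of_isOpen ?_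
        fun z hz => by simpa using hab z hz i
      exact isOpen_lt (by fun_prop) (by fun_prop)
    obtain ⟨e, ⟨⟨⟨h1, h2⟩, h3⟩, h4⟩, he⟩ :=
      ((((h1.and h2).and h3).and h4).filter_mono nhdsWithin_le_nhds |>.and
        (self_mem_nhdsWithin (s := Ioi (0 : ℝ)))).exists
    have he4 : 4 * (e / 4) = e := by ring
    refine ⟨e / 4, div_pos he four_pos, ?_⟩
    rw [he4]
    exact ⟨h1, fun j z => h2 j z trivial, h3, fun z hz i => h4 i z hz⟩
  let p : C(D, Fin k → ℝ) := ⟨fun z i => max (u i + 2 * ε) (min (w i - 2 * ε)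
    ((a z i + b z i) / 2)), by fun_prop⟩
  let m : J → C(D, Fin k → ℝ) := fun j => ⟨fun z i => (c j z i + d j z i) / 2, by fun_prop⟩
  obtain ⟨m', p', hm', hp', hne⟩ := exists_approx_forall_ne (by simpa using hk) hD m p hε
  have hm'i : ∀ j z i, |m' j z i - (c j z i + d j z i) / 2| < ε := fun j z i =>
    (norm_le_pi_norm (m' j z - m j z) i).trans_lt (hm' j z)
  have hp'i : ∀ z i, |p' z i - max (u i + 2 * ε) (min (w i - 2 * ε)
      ((a z i + b z i) / 2))| < ε := fun z i =>
    (norm_le_pi_norm (p' z - p z) i).trans_lt (hp' z)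
  let R : J → D → Fin k → ℝ := fun j z i => (d j z i - c j z i) / 2 + ε
  have hin : ∀ j z i y, |y - m' j z i| ≤ R j z i → c j z i - 2 * ε < y ∧ y < d j z i + 2 * ε := by
    intro j z i y hy
    have h1 := abs_le.1 hy
    have h2 := abs_lt.1 (hm'i j z i)
    simp only [R] at h1
    constructor <;> linarith
  have hout : ∀ j z i y, R j z i ≤ |y - m' j z i| → y < c j z i ∨ d j z i < y := by
    intro j z i y hy
    have h2 := abs_lt.1 (hm'i j z i)
    simp only [R] at hy
    rcases le_abs.1 hy with h1 | h1
    · right; linarith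
    · left; linarith
  obtain ⟨q, hq, hq_in, hq_out, hq_eq⟩ := exists_push_out (m := fun j z => m' j z) (R := R)
    (p := p') (fun j => (m' j).continuous) (fun j => by fun_prop) p'.continuous
    (fun j z i => by have := hcd j z i; simp only [R]; linarith) (fun j z => hne j z)
    (fun j j' hjj z y hy hy' => by
      obtain ⟨i, hi⟩ := (hε_free j z).2.2 ⟨j', hjj.symm⟩
      have h1 := hin j z i _ (hy i)
      have h2 := hin j' z i _ (hy' i)
      dsimp only at hi
      rcases hi with hi | hi <;> linarith)
  have hq_free : ∀ z, BoxFree 0 u w (q z) (q z) (fun j => c j z) fun j => d j z := by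
    intro z
    have hq_mem : ∀ i, u i < q z i ∧ q z i < w i := by
      intro i
      rcases hq_in z with hz | ⟨j, hj⟩
      · have h1 := abs_lt.1 (hp'i z i)
        have h2 := hε_uw i
        rw [hz]
        have h3 : u i + 2 * ε ≤ max (u i + 2 * ε) (min (w i - 2 * ε) ((a z i + b z i) / 2)) :=
          le_max_left _ _
        have h4 : max (u i + 2 * ε) (min (w i - 2 * ε) ((a z i + b z i) / 2)) ≤ w i - 2 * ε :=
          max_le (by linarith) (min_le_left _ _)
        constructor <;> linarith
      · have h1 := hin j z i _ (hj i)
        have h2 := (hε_free j z).1 i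
        have h3 := (hε_free j z).2.1 i
        constructor <;> linarith
    refine ⟨fun i => by linarith [hq_mem i], fun i => by linarith [hq_mem i], fun j => ?_⟩
    obtain ⟨i, hi⟩ := hq_out z j
    refine ⟨i, ?_⟩
    simpa only [add_zero] using hout j z i _ hi
  obtain ⟨δ, hδ_free, hδε, hδ⟩ : ∃ δ, (∀ z ∈ (univ : Set D),
      BoxFree δ u w (q z) (q z) (fun j => c j z) fun j => d j z) ∧ δ < ε ∧ 0 < δ := by
    have h1 : ∀ᶠ e in 𝓝 (0 : ℝ), ∀ z ∈ (univ : Set D),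
        BoxFree e u w (q z) (q z) (fun j => c j z) fun j => d j z := by
      refine isCompact_univ.eventually_forall_of_isOpen ?_ fun z _ => hq_free z
      apply isOpen_setOf_boxFree (c := fun j (y : ℝ × D) => c j y.2)
        (d := fun j (y : ℝ × D) => d j y.2)
      all_goals fun_prop
    exact ((h1.and (eventually_lt_nhds hε)).filter_mono nhdsWithin_le_nhds |>.and
      (self_mem_nhdsWithin (s := Ioi (0 : ℝ)))).exists.imp fun e he => ⟨he.1.1, he.1.2, he.2⟩
  let N : Set D := {z | BoxFree (4 * ε) u w (a z) (b z) (fun j => c j z) fun j => d j z} ∩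
    ⋂ i, {z | a z i + 4 * ε < b z i}
  have hN : IsOpen N := by
    refine IsOpen.inter ?_ (isOpen_iInter_of_finite fun i => isOpen_lt (by fun_prop) (by fun_prop))
    apply isOpen_setOf_boxFree (c := fun j z => c j z) (d := fun j z => d j z)
    all_goals fun_prop
  have hqN : ∀ z ∈ N, ∀ i, a z i + ε < q z i ∧ q z i + ε < b z i := by
    rintro z ⟨hz, hz'⟩
    have hz' : ∀ i, a z i + 4 * ε < b z i := fun i => mem_iInter.1 hz' i
    have hp_eq : ∀ i, |p' z i - (a z i + b z i) / 2| < ε := by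
      intro i
      have h1 := hp'i z i
      have h2 := hz.1 i
      have h3 := hz.2.1 i
      have h4 := hz' i
      rwa [min_eq_right (by linarith), max_eq_right (by linarith)] at h1
    rw [hq_eq z]
    · intro i
      have h1 := abs_lt.1 (hp_eq i)
      have h2 := hz' i
      constructor <;> linarith
    · intro j
      obtain ⟨i, hi⟩ := hz.2.2 j
      refine ⟨i, ?_⟩
      by_contra! hlt
      have h1 := hin j z i _ hlt.le
      have h2 := abs_lt.1 (hp_eq i)
      have h3 := hz' i
      rcases hi with hi | hi <;> linarith
  obtain ⟨χ, hχ0, hχ1, hχ⟩ := exists_continuous_zero_one_of_isClosed hS hN.isClosed_compl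
    (disjoint_compl_right_iff_subset.2 fun z hz => ⟨hε_S z hz, mem_iInter.2 (hε_ab z hz)⟩)
  refine ⟨⟨fun z i => (1 - χ z) * a z i + χ z * (q z i - δ), by fun_prop⟩,
    ⟨fun z i => (1 - χ z) * b z i + χ z * (q z i + δ), by fun_prop⟩, fun z hz => ?_, fun z => ?_⟩
  · have : χ z = 0 := hχ0 hz
    constructor <;> ext i <;> simp [this]
  · simp only [ContinuousMap.coe_mk]
    by_cases hz : z ∈ N
    · have h0 := (hχ z).1
      have h1 := (hχ z).2
      refine ⟨fun i => ?_, hz.1.thicken (fun i => ?_) fun i => ?_⟩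
      · have h2 : 0 ≤ b z i - a z i - 2 * δ := by linarith [hqN z hz i]
        nlinarith [mul_nonneg (sub_nonneg.2 h1) h2]
      · nlinarith [hqN z hz i]
      · nlinarith [hqN z hz i]
    · have : χ z = 1 := hχ1 hz
      simp only [this, sub_self, zero_mul, one_mul, zero_add]
      exact ⟨fun i => by linarith, (hδ_free z trivial).thicken (fun i => le_rfl) fun i => le_rfl⟩

/-- Relative lifting of labelled box tuples over a compact set of dimension less than `k`. -/
theorem exists_lift_openBoxTuples {k : ℕ} {X A A₀ E : Type} [Finite A] [NormedAddCommGroup E]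
    [NormedSpace ℝ E] [FiniteDimensional ℝ E] (hk : Module.finrank ℝ E < k)
    {Bc Bd : X → Fin k → ℝ} (hB : ∀ x i, Bc x i < Bd x i) {s : A → X} {ι : A₀ → A}
    (hι : Function.Injective ι) {D : Set E} (hD : IsCompact D) {S : Set D} (hS : IsClosed S)
    (H : C(D, A → (Fin k → ℝ) × (Fin k → ℝ))) (hHS : ∀ z ∈ S, H z ∈ OpenBoxTuples k Bc Bd s)
    {g : D → OpenBoxTuples k Bc Bd (s ∘ ι)} (hg : Continuous g)
    (hHg : ∀ z ∈ S, ∀ a₀, H z (ι a₀) = (g z : A₀ → (Fin k → ℝ) × (Fin k → ℝ)) a₀) :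
    ∃ G : D → OpenBoxTuples k Bc Bd s, Continuous G ∧
      (∀ z a₀, (G z : A → (Fin k → ℝ) × (Fin k → ℝ)) (ι a₀) =
        (g z : A₀ → (Fin k → ℝ) × (Fin k → ℝ)) a₀) ∧
      ∀ z ∈ S, (G z : A → (Fin k → ℝ) × (Fin k → ℝ)) = H z := by
  classical
  -- Add the boxes outside the range of `ι` one at a time.
  have key : ∀ T : Set A, T.Finite → ∃ G : D → A → (Fin k → ℝ) × (Fin k → ℝ), Continuous G ∧
      (∀ z a₀, G z (ι a₀) = (g z : A₀ → _) a₀) ∧ (∀ z ∈ S, G z = H z) ∧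
      ∀ z, (fun a : ↥(range ι ∪ T) => G z a) ∈
        OpenBoxTuples k Bc Bd (fun a : ↥(range ι ∪ T) => s a) := by
    intro T hT
    induction T, hT using Set.Finite.induction_on with
    | empty =>
      let G : D → A → (Fin k → ℝ) × (Fin k → ℝ) := fun z x =>
        if hx : x ∈ range ι then (g z : A₀ → _) hx.choose else H z x
      have hGι : ∀ z a₀, G z (ι a₀) = (g z : A₀ → _) a₀ := fun z a₀ => by
        have hx : ι a₀ ∈ range ι := ⟨a₀, rfl⟩
        simp only [G, dif_pos hx]
        rw [hι hx.choose_spec]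
      refine ⟨G, continuous_pi fun x => ?_, hGι, fun z hz => funext fun x => ?_, fun z => ?_⟩
      · by_cases hx : x ∈ range ι
        · simp only [G, dif_pos hx]
          exact (continuous_apply _).comp (continuous_subtype_val.comp hg)
        · simp only [G, dif_neg hx]
          fun_prop
      · by_cases hx : x ∈ range ι
        · obtain ⟨a₀, rfl⟩ := hx
          exact (hGι z a₀).trans (hHg z hz a₀).symm
        · exact dif_neg hx
      · obtain ⟨hg1, hg2, hg3⟩ := (g z).2
        have hrange : ∀ x : ↥(range ι ∪ ∅), ∃ a₀, ι a₀ = x := fun x => by simpa using x.2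
        refine ⟨fun x => ?_, fun x => ?_, fun x y hxy hs => ?_⟩ <;>
          obtain ⟨a₀, ha₀⟩ := hrange x
        · simpa only [← ha₀, hGι] using hg1 a₀
        · simpa only [← ha₀, hGι, Function.comp_apply] using hg2 a₀
        · obtain ⟨b₀, hb₀⟩ := hrange y
          simp only [← ha₀, ← hb₀] at hs
          simp only [← ha₀, ← hb₀, hGι]
          refine hg3 a₀ b₀ ?_ hs
          rintro rfl
          exact hxy (Subtype.ext (ha₀.symm.trans hb₀))
    | @insert a T _ _ ih =>
      obtain ⟨G, hGc, hGg, hGS, hG⟩ := ih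
      have hGS_mem : ∀ z ∈ S, G z ∈ OpenBoxTuples k Bc Bd s := fun z hz =>
        hGS z hz ▸ hHS z hz
      by_cases ha : a ∈ range ι ∪ T
      · rw [union_insert, insert_eq_of_mem ha]
        exact ⟨G, hGc, hGg, hGS, hG⟩
      have hne : ∀ x ∈ range ι ∪ T, x ≠ a := fun x hx hxa => ha (hxa ▸ hx)
      let J := {x : ↥(range ι ∪ T) // s x = s a}
      obtain ⟨a', b', hS', hfree⟩ := exists_extend_box (k := k)
        hk hD hS (hB (s a))
        (fun x : J => ⟨fun z => (G z x.1).1, by fun_prop⟩)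
        (fun x : J => ⟨fun z => (G z x.1).2, by fun_prop⟩)
        ⟨fun z => (G z a).1, by fun_prop⟩ ⟨fun z => (G z a).2, by fun_prop⟩
        (fun x z => (hG z).1 x.1)
        (fun x z => by
          have hint := (Icc_subset_interior_Icc_iff ((hG z).1 x.1)).1 ((hG z).2.1 x.1)
          simp only [x.2] at hint
          refine ⟨hint.1, hint.2, fun y => ?_⟩
          exact (disjoint_Icc_iff_boxGap ((hG z).1 x.1) ((hG z).1 y.1.1)).1
            ((hG z).2.2 _ _ (fun hxy => y.2 (Subtype.ext hxy.symm)) (x.2.trans y.1.2.symm)))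
        (fun z hz => (hGS_mem z hz).1 a)
        (fun z hz => by
          have hz := hGS_mem z hz
          have hint := (Icc_subset_interior_Icc_iff (hz.1 a)).1 (hz.2.1 a)
          refine ⟨hint.1, hint.2, fun y => ?_⟩
          exact (disjoint_Icc_iff_boxGap (hz.1 a) (hz.1 y.1)).1
            (hz.2.2 _ _ (hne _ y.1.2).symm y.2.symm))
      simp only [ContinuousMap.coe_mk] at hS' hfree
      have hdisj : ∀ z, ∀ x ∈ range ι ∪ T, s x = s a →
          Disjoint (Icc (a' z) (b' z)) (Icc (G z x).1 (G z x).2) := fun z x hx hxs =>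
        (disjoint_Icc_iff_boxGap (hfree z).1 ((hG z).1 ⟨x, hx⟩)).2
          ((hfree z).2.2.2 ⟨⟨x, hx⟩, hxs⟩)
      have hcases : ∀ x : ↥(range ι ∪ insert a T), (x : A) = a ∨ (x : A) ∈ range ι ∪ T :=
        fun x => by simpa only [union_insert, mem_insert_iff] using x.2
      have hupd : ∀ z, ∀ x ∈ range ι ∪ T, Function.update (G z) a (a' z, b' z) x = G z x :=
        fun z x hx => Function.update_of_ne (hne x hx) _ _
      refine ⟨fun z => Function.update (G z) a (a' z, b' z), hGc.update a (by fun_prop),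
        fun z a₀ => ?_, fun z hz => ?_, fun z => ⟨fun x => ?_, fun x => ?_, fun x y hxy hs => ?_⟩⟩
      · simp only [hupd z _ (Or.inl ⟨a₀, rfl⟩), hGg]
      · dsimp only
        rw [(hS' z hz).1, (hS' z hz).2, ← hGS z hz]
        exact Function.update_eq_self a (G z)
      · rcases hcases x with hx | hx
        · simpa only [hx, Function.update_self] using (hfree z).1
        · simpa only [hupd z x hx] using (hG z).1 ⟨x, hx⟩
      · rcases hcases x with hx | hx
        · simpa only [hx, Function.update_self] using
            (Icc_subset_interior_Icc_iff (hfree z).1).2 ⟨(hfree z).2.1, (hfree z).2.2.1⟩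
        · simpa only [hupd z x hx] using (hG z).2.1 ⟨x, hx⟩
      · rcases hcases x with hx | hx <;> rcases hcases y with hy | hy
        · exact absurd (Subtype.ext (hx.trans hy.symm)) hxy
        · simp only [hx] at hs
          simpa only [hx, Function.update_self, hupd z y hy] using hdisj z y hy hs.symm
        · simp only [hy] at hs
          simpa only [hy, Function.update_self, hupd z x hx] using (hdisj z x hx hs).symm
        · simpa only [hupd z x hx, hupd z y hy] using
            (hG z).2.2 ⟨x, hx⟩ ⟨y, hy⟩ (fun h => hxy (Subtype.ext (Subtype.mk.inj h))) hs
  obtain ⟨G, hGc, hGg, hGS, hG⟩ := key univ finite_univ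
  have hG_mem : ∀ z, G z ∈ OpenBoxTuples k Bc Bd s := fun z => by
    obtain ⟨h1, h2, h3⟩ := hG z
    have hmem : ∀ a, a ∈ range ι ∪ univ := fun a => Or.inr trivial
    exact ⟨fun a => h1 ⟨a, hmem a⟩, fun a => h2 ⟨a, hmem a⟩, fun a a' hne =>
      h3 ⟨a, hmem a⟩ ⟨a', hmem a'⟩ fun h => hne (Subtype.mk.inj h)⟩
  exact ⟨fun z => ⟨G z, hG_mem z⟩, hGc.subtype_mk hG_mem, hGg, hGS⟩

/-- Relative lifting property for spaces of labelled boxes:  with `A₀ ⊆ A` (given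
by an injection `ι : A₀ → A`) and `ρ : E°({B_x}, s) → E°({B_x}, s₀)` the map
forgetting the boxes labelled by `A \ A₀`, every square
`S^{i-1} → E°({B_x}, s)`, `D^i → E°({B_x}, s₀)` (with `i ≤ k - 1`) admits a lift
`D^i → E°({B_x}, s)`. -/
theorem statement16 (k : ℕ) (hk : 1 ≤ k) {X A A₀ : Type}
    [Finite X] [Finite A] [Finite A₀]
    (Bc Bd : X → (Fin k → ℝ)) (hB : ∀ x i, Bc x i < Bd x i)
    (s : A → X) (ι : A₀ → A) (hι : Function.Injective ι)
    (i : ℕ) (hi : i ≤ k - 1)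
    (h : ↥(Metric.sphere (0 : EuclideanSpace ℝ (Fin i)) 1) →
      ↥(OpenBoxTuples k Bc Bd s))
    (hh : Continuous h)
    (g : ↥(Metric.closedBall (0 : EuclideanSpace ℝ (Fin i)) 1) →
      ↥(OpenBoxTuples k Bc Bd (s ∘ ι)))
    (hg : Continuous g)
    (hcompat : ∀ (z : EuclideanSpace ℝ (Fin i))
      (hz : z ∈ Metric.sphere (0 : EuclideanSpace ℝ (Fin i)) 1),
      (fun a₀ => ((h ⟨z, hz⟩ : A → (Fin k → ℝ) × (Fin k → ℝ))) (ι a₀))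
        = ((g ⟨z, Metric.sphere_subset_closedBall hz⟩ :
            A₀ → (Fin k → ℝ) × (Fin k → ℝ)))) :
    ∃ G : ↥(Metric.closedBall (0 : EuclideanSpace ℝ (Fin i)) 1) →
        ↥(OpenBoxTuples k Bc Bd s),
      Continuous G ∧
      (∀ z : ↥(Metric.closedBall (0 : EuclideanSpace ℝ (Fin i)) 1),
        (fun a₀ => ((G z : A → (Fin k → ℝ) × (Fin k → ℝ))) (ι a₀))
          = ((g z : A₀ → (Fin k → ℝ) × (Fin k → ℝ)))) ∧
      (∀ (z : EuclideanSpace ℝ (Fin i))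
        (hz : z ∈ Metric.sphere (0 : EuclideanSpace ℝ (Fin i)) 1),
        G ⟨z, Metric.sphere_subset_closedBall hz⟩ = h ⟨z, hz⟩) := by
  have hS : IsClosed {z : Metric.closedBall (0 : EuclideanSpace ℝ (Fin i)) 1 |
      (z : EuclideanSpace ℝ (Fin i)) ∈ Metric.sphere 0 1} :=
    Metric.isClosed_sphere.preimage continuous_subtype_val
  obtain ⟨H, hH⟩ := ContinuousMap.exists_restrict_eq hS
    ⟨fun z => (h ⟨z.1, z.2⟩ : A → (Fin k → ℝ) × (Fin k → ℝ)), by fun_prop⟩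
  have hHS : ∀ (z : Metric.closedBall (0 : EuclideanSpace ℝ (Fin i)) 1)
      (hz : (z : EuclideanSpace ℝ (Fin i)) ∈ Metric.sphere 0 1), H z = h ⟨z, hz⟩ :=
    fun z hz => DFunLike.congr_fun hH ⟨z, hz⟩
  obtain ⟨G, hGc, hGg, hGS⟩ := exists_lift_openBoxTuples
    (show Module.finrank ℝ (EuclideanSpace ℝ (Fin i)) < k by
      rw [finrank_euclideanSpace_fin]
      omega) hB hι (isCompact_closedBall _ _) hS H
    (fun z hz => by
      rw [hHS z hz]
      exact (h ⟨z, hz⟩).2) hg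
    (fun z hz a₀ => by
      rw [hHS z hz]
      exact congrFun (hcompat z hz) a₀)
  refine ⟨G, hGc, fun z => funext (hGg z), fun z hz => Subtype.ext ?_⟩
  rw [hGS ⟨z, Metric.sphere_subset_closedBall hz⟩ hz]
  exact hHS ⟨z, Metric.sphere_subset_closedBall hz⟩ hz
end

section
/- Let n ≥ 0 and let w ≤ u be elements of the Boolean lattice {0,1}^n (with the pointwise partial order). Call two maximal chains from w to u adjacent if they differ in exactly one element. Then any two maximal chains from w to u are connected by a finite sequence of maximal chains from w to u in which consecutive chains are adjacent. (Equivalently: any two directed edge paths from u to w in the cube category are related by a sequence of swaps across 2-dimensional faces.) -/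
/-- A maximal chain from `w` to `u` in the Boolean lattice of subsets of `Fin n`
(representing `{0,1}^n` with the pointwise order): a sequence
`w = c 0 ⊆ c 1 ⊆ … ⊆ c m = u` in which each step increases the cardinality by
exactly one. -/
def IsMaxChain' (n m : ℕ) (w u : Finset (Fin n))
    (c : Fin (m + 1) → Finset (Fin n)) : Prop :=
  c 0 = w ∧ c (Fin.last m) = u ∧
  ∀ j : Fin m, c j.castSucc ⊆ c j.succ ∧
    (c j.succ).card = (c j.castSucc).card + 1

/-- Two maximal chains from `w` to `u` (of the same length) are adjacent if they
differ in exactly one position. -/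
def AdjacentChains (n m : ℕ) (w u : Finset (Fin n))
    (c c' : Fin (m + 1) → Finset (Fin n)) : Prop :=
  IsMaxChain' n m w u c ∧ IsMaxChain' n m w u c' ∧ ∃! j : Fin (m + 1), c j ≠ c' j

theorem isMaxChain'_cons {n m : ℕ} {w x u : Finset (Fin n)} {d : Fin (m + 1) → Finset (Fin n)}
    (hd : IsMaxChain' n m x u d) (hwx : w ⊆ x) (hcard : x.card = w.card + 1) :
    IsMaxChain' n (m + 1) w u (Fin.cons w d : Fin (m + 2) → Finset (Fin n)) := by
  obtain ⟨h0, hlast, hstep⟩ := hd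
  refine ⟨rfl, ?_, fun j => ?_⟩
  · rw [← Fin.succ_last, Fin.cons_succ, hlast]
  · cases j using Fin.cases with
    | zero => simpa [h0] using ⟨hwx, hcard⟩
    | succ j => simpa [← Fin.succ_castSucc] using hstep j

theorem IsMaxChain'.exists_eq_cons {n m : ℕ} {w u : Finset (Fin n)}
    {c : Fin (m + 2) → Finset (Fin n)} (hc : IsMaxChain' n (m + 1) w u c) :
    ∃ (x : Finset (Fin n)) (d : Fin (m + 1) → Finset (Fin n)),
      c = Fin.cons w d ∧ w ⊆ x ∧ x.card = w.card + 1 ∧ IsMaxChain' n m x u d := by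
  obtain ⟨rfl, hlast, hstep⟩ := hc
  refine ⟨c 1, Fin.tail c, (Fin.cons_self_tail c).symm, (hstep 0).1, (hstep 0).2, rfl, hlast,
    fun j => hstep j.succ⟩

theorem IsMaxChain'.subset_and_card {n m : ℕ} {w u : Finset (Fin n)}
    {c : Fin (m + 1) → Finset (Fin n)} (hc : IsMaxChain' n m w u c) :
    w ⊆ u ∧ u.card = w.card + m := by
  induction m generalizing w with
  | zero =>
    obtain ⟨rfl, rfl, -⟩ := hc
    simp
  | succ m ih =>
    obtain ⟨x, d, -, hwx, hcard, hd⟩ := hc.exists_eq_cons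
    obtain ⟨hxu, hu⟩ := ih hd
    exact ⟨hwx.trans hxu, by omega⟩

theorem exists_isMaxChain' {n m : ℕ} {w u : Finset (Fin n)} (hwu : w ⊆ u)
    (hcard : u.card = w.card + m) : ∃ c, IsMaxChain' n m w u c := by
  induction m generalizing w with
  | zero =>
    have : w = u := Finset.eq_of_subset_of_card_le hwu (by omega)
    exact ⟨fun _ => w, rfl, this, fun j => j.elim0⟩
  | succ m ih =>
    obtain ⟨x, hwx, hxu, hx⟩ := Finset.exists_subsuperset_card_eq hwu
      (show w.card ≤ w.card + 1 by omega) (by omega)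
    obtain ⟨d, hd⟩ := ih hxu (by omega)
    exact ⟨_, isMaxChain'_cons hd hwx hx⟩

theorem AdjacentChains.cons {n m : ℕ} {w x u : Finset (Fin n)}
    {d d' : Fin (m + 1) → Finset (Fin n)} (hwx : w ⊆ x) (hcard : x.card = w.card + 1)
    (h : AdjacentChains n m x u d d') :
    AdjacentChains n (m + 1) w u (Fin.cons w d : Fin (m + 2) → Finset (Fin n))
      (Fin.cons w d' : Fin (m + 2) → Finset (Fin n)) := by
  obtain ⟨hd, hd', j, hj, huniq⟩ := h
  refine ⟨isMaxChain'_cons hd hwx hcard, isMaxChain'_cons hd' hwx hcard, j.succ, by simpa using hj,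
    fun i hi => ?_⟩
  cases i using Fin.cases with
  | zero => simp at hi
  | succ i => rw [huniq i (by simpa using hi)]

theorem adjacentChains_cons_cons {n m : ℕ} {w x y v u : Finset (Fin n)}
    {e : Fin (m + 1) → Finset (Fin n)} (hxy : x ≠ y) (he : IsMaxChain' n m v u e)
    (hwx : w ⊆ x) (hx : x.card = w.card + 1) (hwy : w ⊆ y) (hy : y.card = w.card + 1)
    (hxv : x ⊆ v) (hvx : v.card = x.card + 1) (hyv : y ⊆ v) (hvy : v.card = y.card + 1) :
    AdjacentChains n (m + 2) w u
      (Fin.cons w (Fin.cons x e : Fin (m + 2) → Finset (Fin n)) : Fin (m + 3) → Finset (Fin n))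
      (Fin.cons w (Fin.cons y e : Fin (m + 2) → Finset (Fin n)) : Fin (m + 3) → Finset (Fin n)) := by
  refine ⟨isMaxChain'_cons (isMaxChain'_cons he hxv hvx) hwx hx,
    isMaxChain'_cons (isMaxChain'_cons he hyv hvy) hwy hy, Fin.succ 0, by simpa using hxy,
    fun i hi => ?_⟩
  cases i using Fin.cases with
  | zero => simp at hi
  | succ i =>
    cases i using Fin.cases with
    | zero => rfl
    | succ i => simp at hi

theorem Finset.card_union_of_covers {α : Type*} [DecidableEq α] {w x y : Finset α} (hxy : x ≠ y)
    (hwx : w ⊆ x) (hx : x.card = w.card + 1) (hwy : w ⊆ y) (hy : y.card = w.card + 1) :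
    (x ∪ y).card = w.card + 2 := by
  have hle : w.card ≤ (x ∩ y).card := card_le_card (subset_inter hwx hwy)
  have hlt : (x ∩ y).card < x.card := by
    refine card_lt_card (inter_subset_left.ssubset_of_ne fun h => hxy ?_)
    exact eq_of_subset_of_card_le (inter_eq_left.mp h) (by omega)
  have := card_union_add_card_inter x y
  omega

theorem IsMaxChain'.reflTransGen_adjacentChains {n m : ℕ} {w u : Finset (Fin n)}
    {c c' : Fin (m + 1) → Finset (Fin n)}
    (hc : IsMaxChain' n m w u c) (hc' : IsMaxChain' n m w u c') :
    Relation.ReflTransGen (AdjacentChains n m w u) c c' := by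
  induction m generalizing w with
  | zero =>
    have : c = c' := funext fun i => by rw [Fin.fin_one_eq_zero i]; exact hc.1.trans hc'.1.symm
    rw [this]
  | succ m ih =>
    obtain ⟨x, d, rfl, hwx, hx, hd⟩ := hc.exists_eq_cons
    obtain ⟨y, d', rfl, hwy, hy, hd'⟩ := hc'.exists_eq_cons
    have lift {z : Finset (Fin n)} {a b : Fin (m + 1) → Finset (Fin n)} (hwz : w ⊆ z)
        (hz : z.card = w.card + 1) (ha : IsMaxChain' n m z u a) (hb : IsMaxChain' n m z u b) :
        Relation.ReflTransGen (AdjacentChains n (m + 1) w u) (Fin.cons w a) (Fin.cons w b) :=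
      (ih ha hb).lift (fun f => (Fin.cons w f : Fin (m + 2) → Finset (Fin n)))
        fun _ _ h => h.cons hwz hz
    by_cases hxy : x = y
    · subst hxy
      exact lift hwx hx hd hd'
    · have hv := Finset.card_union_of_covers hxy hwx hx hwy hy
      obtain ⟨hxu, hux⟩ := hd.subset_and_card
      have hvu : x ∪ y ⊆ u := Finset.union_subset hxu hd'.subset_and_card.1
      have hle := Finset.card_le_card hvu
      obtain ⟨k, rfl⟩ : ∃ k, m = k + 1 := ⟨m - 1, by omega⟩
      obtain ⟨e, he⟩ := exists_isMaxChain' (m := k) hvu (by omega)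
      have hxv : x ⊆ x ∪ y := Finset.subset_union_left
      have hyv : y ⊆ x ∪ y := Finset.subset_union_right
      have hvx : (x ∪ y).card = x.card + 1 := by omega
      have hvy : (x ∪ y).card = y.card + 1 := by omega
      exact ((lift hwx hx hd (isMaxChain'_cons he hxv hvx)).tail
        (adjacentChains_cons_cons hxy he hwx hx hwy hy hxv hvx hyv hvy)).trans
        (lift hwy hy (isMaxChain'_cons he hyv hvy) hd')

/-- Any two maximal chains from `w` to `u` in the Boolean lattice `{0,1}^n` are
connected by a finite sequence of maximal chains in which consecutive chains are
adjacent (differ in exactly one element). -/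
theorem statement17 (n : ℕ) (w u : Finset (Fin n)) (hwu : w ⊆ u)
    (m : ℕ) (hm : m = u.card - w.card)
    (c c' : Fin (m + 1) → Finset (Fin n))
    (hc : IsMaxChain' n m w u c) (hc' : IsMaxChain' n m w u c') :
    Relation.ReflTransGen (AdjacentChains n m w u) c c' :=
  hc.reflTransGen_adjacentChains hc'
end
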